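/- For all c > 0 and ε > 0 there exists δ > 0 such that for all sufficiently large N, the following holds: for every p with 0 ≤ p ≤ c/√N, every pair of sets A, B ⊆ {-1,1}^N such that ξ_0(A × B) ≥ 2^{-δN}, and every s ∈ ℝ, one has (1/2)·( e^s · ξ_{-p}(A × B) + e^{-s} · ξ_p(A × B) ) ≥ (1 - ε)·ξ_0(A × B). -/

import Mathlib

/-- Number of coordinates on which `x` and `y` agree. -/
def agree {N : ℕ} (x y : Fin N → Bool) : ℕ :=
  (Finset.univ.filter fun i => x i = y i).card

/-- The probability that `ξ_p` assigns to the pair `(x, y)`. -/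
noncomputable def xiMass (N : ℕ) (p : ℝ) (x y : Fin N → Bool) : ℝ :=
  (1 / 2) ^ N * ((1 + p) / 2) ^ agree x y * ((1 - p) / 2) ^ (N - agree x y)

/-- The probability that `(x,y) ∈ A × B` under `ξ_p`. -/
noncomputable def xiProb (N : ℕ) (p : ℝ) (A B : Finset (Fin N → Bool)) : ℝ :=
  ∑ x ∈ A, ∑ y ∈ B, xiMass N p x y

/-!
With respect to `ξ_0`, the density of `ξ_a` at `(x, y)` is `∏ j, (1 + a * x_j * y_j)`, which is
at least `exp (a * ⟪x, y⟫ - (a ^ 2 / 2 + O(|a| ^ 3)) * N)`. It therefore suffices that on large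
rectangles the average of `exp (a * ⟪x, y⟫)` be at least `exp (a * m + a ^ 2 / 2 * N - ε)`, with `m`
the average of `⟪x, y⟫`: then `ξ_a` is at least `exp (a * m - ε)` times `ξ_0` for `a = p` and
`a = -p`, and the two bounds combine because `1 ≤ cosh`.

For fixed `x`, Gibbs' variational inequality is applied to a discrete Föllmer drift: the uniform
measure on `B` is tilted by `∏ k, (1 + a * u k * innovation k)`, where `u k` is the coefficient of
`⟪x, ·⟫` in the regression on the `k`-th martingale difference of the coordinates, clipped and
stopped so that the tilt stays under control. Its gain over the entropy it costs is `a ^ 2 / 2`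
times the quadratic variation `∑ k, condVar k * u k ^ 2`. At most points `y` of a large set `B` the
map from `x` to `(√(condVar k) * u k)_k` is close to the identity in Hilbert–Schmidt norm, because
the entropy deficiency of `B` bounds the biases of the coordinates and Bessel's inequality then
bounds their correlations. So the quadratic variation is nearly `N` for all but exponentially few
`x`, and Jensen's inequality over `x ∈ A` finishes the estimate.
-/

section

open Finset
open scoped BigOperators RealInnerProductSpace

section Real

open Real in
lemma sq_sub_one_div_six_le_klFun {t : ℝ} (ht0 : 0 ≤ t) (ht2 : t ≤ 2) :
    (t - 1) ^ 2 / 6 ≤ InformationTheory.klFun t := by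
  rcases ht0.eq_or_lt with rfl | ht
  · rw [InformationTheory.klFun_zero]
    norm_num
  have hs : 0 < √t := sqrt_pos.mpr ht
  have hts : t = √t ^ 2 := (sq_sqrt ht0).symm
  have hlog : 2 * (1 - (√t)⁻¹) ≤ log t := by
    have := one_sub_inv_le_log_of_pos hs
    rw [log_sqrt ht0] at this
    linarith
  have hs2 : (√t + 1) ^ 2 ≤ 6 := by nlinarith
  calc (t - 1) ^ 2 / 6 = (√t - 1) ^ 2 * ((√t + 1) ^ 2 / 6) := by
        rw [show t - 1 = (√t - 1) * (√t + 1) by linear_combination hts]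
        ring
    _ ≤ (√t - 1) ^ 2 := mul_le_of_le_one_right (sq_nonneg _) (by linarith)
    _ = t * (2 * (1 - (√t)⁻¹)) + 1 - t := by
        rw [hts, sqrt_sq hs.le]
        field_simp
        ring
    _ ≤ InformationTheory.klFun t := by
        rw [InformationTheory.klFun]
        gcongr

lemma abs_log_one_add_sub_le {t : ℝ} (ht : |t| ≤ 1 / 2) :
    |Real.log (1 + t) - (t - t ^ 2 / 2)| ≤ 2 * |t| ^ 3 := by
  have h := Real.abs_log_sub_add_sum_range_le (x := -t) (by rw [abs_neg]; linarith) 2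
  simp only [sum_range_succ, range_zero, sum_empty, abs_neg, sub_neg_eq_add] at h
  calc |Real.log (1 + t) - (t - t ^ 2 / 2)| ≤ |t| ^ 3 / (1 - |t|) := by
        convert h using 2
        push_cast
        ring
    _ ≤ 2 * |t| ^ 3 := by
        rw [div_le_iff₀ (by linarith)]
        nlinarith [pow_nonneg (abs_nonneg t) 3]

lemma one_add_mul_log_one_add_le {s ρ : ℝ} (hs : |s| ≤ ρ) (hρ : ρ ≤ 1 / 2) :
    (1 + s) * Real.log (1 + s) ≤ s + (1 / 2 + 4 * ρ) * s ^ 2 := by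
  obtain ⟨hlo, hhi⟩ := abs_le.mp (hs.trans hρ)
  have hlog : Real.log (1 + s) ≤ s - s ^ 2 / 2 + 2 * |s| ^ 3 := by
    linarith [(abs_le.mp (abs_log_one_add_sub_le (hs.trans hρ))).2]
  have hcube : |s| ^ 3 = |s| * s ^ 2 := by rw [← sq_abs]; ring
  calc (1 + s) * Real.log (1 + s) ≤ (1 + s) * (s - s ^ 2 / 2 + 2 * |s| ^ 3) := by gcongr; linarith
    _ = s + s ^ 2 / 2 + (2 * |s| * (1 + s) - s / 2) * s ^ 2 := by rw [hcube]; ring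
    _ ≤ s + s ^ 2 / 2 + 4 * ρ * s ^ 2 := by
        gcongr
        nlinarith [abs_nonneg s, neg_abs_le s]
    _ = s + (1 / 2 + 4 * ρ) * s ^ 2 := by ring

lemma exp_sub_le_one_add {t : ℝ} (ht : |t| ≤ 1 / 2) :
    Real.exp (t - (t ^ 2 / 2 + 2 * |t| ^ 3)) ≤ 1 + t := by
  rw [← Real.le_log_iff_exp_le (by linarith [neg_abs_le t])]
  linarith [(abs_le.mp (abs_log_one_add_sub_le ht)).1]

lemma sqrt_two_pow_le {d : ℕ} {x : ℝ} (hd : d ≤ x) : √2 ^ d ≤ Real.exp (x / 2) := by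
  have h2 : √2 ≤ Real.exp (1 / 2) := by
    rw [Real.sqrt_le_left (Real.exp_pos _).le, ← Real.exp_nat_mul]
    linarith [Real.add_one_le_exp (((2 : ℕ) : ℝ) * (1 / 2))]
  calc √2 ^ d ≤ Real.exp (1 / 2) ^ d := by gcongr
    _ = Real.exp (d / 2) := by rw [← Real.exp_nat_mul, mul_one_div]
    _ ≤ Real.exp (x / 2) := by gcongr

lemma exp_neg_mul_le_two_rpow {δ t : ℝ} (hδ : 0 ≤ δ) (ht : 0 ≤ t) :
    Real.exp (-(δ * t)) ≤ 2 ^ (-δ * t) := by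
  rw [Real.rpow_def_of_pos two_pos, Real.exp_le_exp]
  nlinarith [Real.log_two_lt_d9, mul_nonneg hδ ht]

lemma one_sub_le_exp_add_exp_div_two (s u ε : ℝ) :
    1 - ε ≤ (Real.exp s * Real.exp (-u - ε) + Real.exp (-s) * Real.exp (u - ε)) / 2 := by
  calc 1 - ε ≤ Real.exp (-ε) := Real.one_sub_le_exp_neg ε
    _ ≤ Real.exp (-ε) * Real.cosh (s - u) :=
        le_mul_of_one_le_right (Real.exp_pos _).le (Real.one_le_cosh _)
    _ = (Real.exp s * Real.exp (-u - ε) + Real.exp (-s) * Real.exp (u - ε)) / 2 := by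
        rw [Real.cosh_eq, mul_div_assoc', mul_add, ← Real.exp_add, ← Real.exp_add, ← Real.exp_add,
          ← Real.exp_add]
        ring_nf

end Real

section UniformProb

variable {ι κ : Type*} {s t : Finset ι}

open Classical in
/-- Probability of `P` under the uniform measure on `s`. -/
noncomputable def uniformProb (s : Finset ι) (P : ι → Prop) : ℝ :=
  𝔼 i ∈ s, if P i then 1 else 0

lemma exp_expect_mul_sub_log_le {w f : ι → ℝ} (hw : ∀ i ∈ s, 0 < w i) (hw1 : 𝔼 i ∈ s, w i = 1) :
    Real.exp (𝔼 i ∈ s, w i * (f i - Real.log (w i))) ≤ 𝔼 i ∈ s, Real.exp (f i) := by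
  have h := convexOn_exp.map_sum_le (t := s) (w := fun i => w i / #s)
    (p := fun i => f i - Real.log (w i)) (fun i hi => div_nonneg (hw i hi).le (Nat.cast_nonneg _))
    (by rw [← sum_div, ← expect_eq_sum_div_card, hw1]) fun _ _ => Set.mem_univ _
  simp only [smul_eq_mul, div_mul_eq_mul_div, ← sum_div, ← expect_eq_sum_div_card] at h
  refine h.trans_eq (expect_congr rfl fun i hi => ?_)
  rw [Real.exp_sub, Real.exp_log (hw i hi), mul_div_cancel₀ _ (hw i hi).ne']

lemma exp_expect_le (hs : s.Nonempty) (f : ι → ℝ) :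
    Real.exp (𝔼 i ∈ s, f i) ≤ 𝔼 i ∈ s, Real.exp (f i) := by
  simpa using exp_expect_mul_sub_log_le (s := s) (w := 1) (f := f) (fun _ _ => one_pos)
    (expect_const hs 1)

lemma le_expect_mul_of_expect_sq_le {w f : ι → ℝ} {K η t : ℝ} (hw : ∀ i ∈ s, 0 ≤ w i)
    (hw1 : 𝔼 i ∈ s, w i = 1) (hw2 : 𝔼 i ∈ s, w i ^ 2 ≤ K) (hf : ∀ i ∈ s, 0 ≤ f i)
    (hK : 0 < K) (hη : 0 < η) (ht : 0 ≤ t) :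
    t * (1 - (η + K / η * uniformProb s fun i => f i < t) / 2) ≤ 𝔼 i ∈ s, w i * f i := by
  classical
  have ptwise : ∀ i ∈ s,
      t * (w i - (η / K * w i ^ 2 + K / η * if f i < t then 1 else 0) / 2) ≤ w i * f i := by
    intro i hi
    have hwi := hw i hi
    split_ifs with h
    · have amgm : w i ≤ (η / K * w i ^ 2 + K / η * 1) / 2 := by
        have hid : (η / K * w i ^ 2 + K / η * 1) / 2 - w i = (η * w i - K) ^ 2 / (2 * η * K) := by
          field_simp
          ring
        have : 0 ≤ (η * w i - K) ^ 2 / (2 * η * K) := by positivity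
        linarith
      nlinarith [mul_nonneg hwi (hf i hi)]
    · have hsq : 0 ≤ η / K * w i ^ 2 := by positivity
      nlinarith [mul_le_mul_of_nonneg_left (not_lt.mp h) hwi]
  calc t * (1 - (η + K / η * uniformProb s fun i => f i < t) / 2)
      ≤ t * (1 - (η / K * 𝔼 i ∈ s, w i ^ 2 + K / η * uniformProb s fun i => f i < t) / 2) := by
        have : η / K * 𝔼 i ∈ s, w i ^ 2 ≤ η :=
          (mul_le_mul_of_nonneg_left hw2 (by positivity)).trans_eq (div_mul_cancel₀ η hK.ne')
        gcongr
    _ = 𝔼 i ∈ s, t * (w i - (η / K * w i ^ 2 + K / η * if f i < t then 1 else 0) / 2) := by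
        rw [← mul_expect, expect_sub_distrib, hw1, ← expect_div, expect_add_distrib, ← mul_expect,
          ← mul_expect, uniformProb]
    _ ≤ 𝔼 i ∈ s, w i * f i := expect_le_expect ptwise

lemma uniformProb_le_expect {P : ι → Prop} {f : ι → ℝ} (hf : ∀ i ∈ s, 0 ≤ f i)
    (hP : ∀ i ∈ s, P i → 1 ≤ f i) : uniformProb s P ≤ 𝔼 i ∈ s, f i :=
  expect_le_expect fun i hi => by
    split_ifs with h
    · exact hP i hi h
    · exact hf i hi

lemma uniformProb_le_one (s : Finset ι) (P : ι → Prop) : uniformProb s P ≤ 1 := by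
  rcases s.eq_empty_or_nonempty with rfl | hs
  · simp only [uniformProb, expect_empty, zero_le_one]
  · exact expect_le hs fun i _ => by split_ifs <;> norm_num

lemma uniformProb_le_sum_add [Fintype κ] {P R : ι → Prop} {Q : κ → ι → Prop}
    (h : ∀ i ∈ s, P i → (∃ k, Q k i) ∨ R i) :
    uniformProb s P ≤ ∑ k, uniformProb s (Q k) + uniformProb s R := by
  classical
  simp only [uniformProb, ← expect_sum_comm, ← expect_add_distrib]
  refine expect_le_expect fun i hi => ?_
  have hQ : ∀ k ∈ univ, (0 : ℝ) ≤ if Q k i then 1 else 0 := fun k _ => by split_ifs <;> norm_num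
  by_cases hP : P i
  · rw [if_pos hP]
    rcases h i hi hP with ⟨k, hk⟩ | hR
    · have := single_le_sum hQ (mem_univ k)
      rw [if_pos hk] at this
      split_ifs <;> linarith
    · rw [if_pos hR]
      exact le_add_of_nonneg_left (sum_nonneg hQ)
  · rw [if_neg hP]
    have := sum_nonneg hQ
    split_ifs <;> linarith

lemma uniformProb_le_card_div_card_mul (hst : s ⊆ t) (P : ι → Prop) :
    uniformProb s P ≤ #t / #s * uniformProb t P := by
  rcases t.eq_empty_or_nonempty with rfl | ht
  · rw [subset_empty.mp hst, card_empty, Nat.cast_zero, zero_div, zero_mul, uniformProb,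
      expect_empty]
  · have hcard : (#t : ℝ) ≠ 0 := by exact_mod_cast ht.card_pos.ne'
    rw [uniformProb, uniformProb, expect_eq_sum_div_card, expect_eq_sum_div_card, mul_comm,
      div_mul_div_cancel₀ hcard]
    gcongr

lemma expect_uniformProb_comm (s : Finset ι) (t : Finset κ) (P : ι → κ → Prop) :
    𝔼 i ∈ s, uniformProb t (P i) = 𝔼 k ∈ t, uniformProb s fun i => P i k :=
  expect_comm _ _ _

end UniformProb

/-! ### Random signs -/

section RandomSigns

open MeasureTheory

variable {ι κ : Type*} [Fintype ι]

/-- The point of the cube `{-1, 1} ^ ι` encoded by `x`, as a Euclidean vector. -/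
noncomputable def signVec (x : ι → Bool) : EuclideanSpace ℝ ι :=
  WithLp.toLp 2 fun j => if x j then 1 else -1

lemma norm_signVec_sq (x : ι → Bool) : ‖signVec x‖ ^ 2 = Fintype.card ι := by
  have h (j : ι) : ‖signVec x j‖ ^ 2 = 1 := by
    simp only [signVec]
    split_ifs <;> norm_num
  rw [EuclideanSpace.norm_sq_eq, sum_congr rfl fun j _ => h j, sum_const, nsmul_one, card_univ]

lemma inner_signVec (v : EuclideanSpace ℝ ι) (x : ι → Bool) :
    ⟪v, signVec x⟫ = ∑ j, v j * if x j then 1 else -1 := by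
  simp only [PiLp.inner_apply, RCLike.inner_apply, signVec, conj_trivial, mul_comm]

variable [DecidableEq ι]

lemma sum_prod_apply_bool (f : ι → Bool → ℝ) :
    ∑ x : ι → Bool, ∏ j, f j (x j) = ∏ j, (f j true + f j false) := by
  simp only [← Fintype.sum_bool, prod_univ_sum, Fintype.piFinset_univ]

lemma expect_exp_inner_signVec_le (v : EuclideanSpace ℝ ι) :
    𝔼 x, Real.exp ⟪v, signVec x⟫ ≤ Real.exp (‖v‖ ^ 2 / 2) :=
  calc 𝔼 x, Real.exp ⟪v, signVec x⟫
      = (∑ x : ι → Bool, ∏ j, Real.exp (v j * if x j then 1 else -1)) / 2 ^ Fintype.card ι := by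
        simp only [Fintype.expect_eq_sum_div_card, inner_signVec, Real.exp_sum, Fintype.card_pi,
          Fintype.card_bool, prod_const, card_univ, Nat.cast_pow, Nat.cast_ofNat]
    _ = ∏ j, Real.cosh (v j) := by
        rw [sum_prod_apply_bool fun j b => Real.exp (v j * if b then 1 else -1), ← card_univ,
          ← prod_const, ← prod_div_distrib]
        simp [Real.cosh_eq]
    _ ≤ ∏ j, Real.exp (v j ^ 2 / 2) :=
        prod_le_prod (fun j _ => (Real.cosh_pos _).le) fun j _ => Real.cosh_le_exp_half_sq _
    _ = Real.exp (‖v‖ ^ 2 / 2) := by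
        rw [← Real.exp_sum, ← sum_div, EuclideanSpace.real_norm_sq_eq]

lemma uniformProb_lt_abs_inner_signVec_le {v : EuclideanSpace ℝ ι} (hv : ‖v‖ ^ 2 ≤ 2) {r : ℝ}
    (hr : 0 ≤ r) :
    uniformProb univ (fun x => r < |⟪v, signVec x⟫|) ≤ 2 * Real.exp (-(r ^ 2 / 4)) := by
  have hmoment (c : ℝ) (hc : c ^ 2 = (r / 2) ^ 2) :
      𝔼 x, Real.exp (c * ⟪v, signVec x⟫) ≤ Real.exp (r ^ 2 / 4) := by
    simp only [← real_inner_smul_left]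
    refine (expect_exp_inner_signVec_le _).trans (Real.exp_le_exp.mpr ?_)
    rw [norm_smul, mul_pow, Real.norm_eq_abs, sq_abs, hc]
    nlinarith [sq_nonneg r]
  calc uniformProb univ (fun x => r < |⟪v, signVec x⟫|)
      ≤ 𝔼 x, Real.exp (-(r ^ 2 / 2)) *
          (Real.exp (r / 2 * ⟪v, signVec x⟫) + Real.exp (-(r / 2) * ⟪v, signVec x⟫)) := by
        refine uniformProb_le_expect (fun x _ => by positivity) fun x _ hx => ?_
        rw [mul_add, ← Real.exp_add, ← Real.exp_add]
        rcases lt_abs.mp hx with h | h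
        · exact le_add_of_le_of_nonneg (Real.one_le_exp (by nlinarith)) (Real.exp_pos _).le
        · exact le_add_of_nonneg_of_le (Real.exp_pos _).le (Real.one_le_exp (by nlinarith))
    _ ≤ Real.exp (-(r ^ 2 / 2)) * (Real.exp (r ^ 2 / 4) + Real.exp (r ^ 2 / 4)) := by
        rw [← mul_expect, expect_add_distrib]
        gcongr
        · exact hmoment _ rfl
        · exact hmoment _ (neg_sq _)
    _ = 2 * Real.exp (-(r ^ 2 / 4)) := by
        rw [← two_mul, mul_left_comm, ← Real.exp_add]
        ring_nf

lemma exp_neg_sq_add_mul_eq (t x : ℝ) :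
    Real.exp (-x ^ 2 + t * x) = Real.exp (t ^ 2 / 4) * Real.exp (-1 * (x - t / 2) ^ 2) := by
  rw [← Real.exp_add]
  ring_nf

lemma integrable_exp_neg_sq_add_mul (t : ℝ) :
    Integrable fun x : ℝ => Real.exp (-x ^ 2 + t * x) := by
  simp only [exp_neg_sq_add_mul_eq]
  exact ((integrable_exp_neg_mul_sq one_pos).comp_sub_right (t / 2)).const_mul _

lemma integral_exp_neg_sq_add_mul (t : ℝ) :
    ∫ x : ℝ, Real.exp (-x ^ 2 + t * x) = √Real.pi * Real.exp (t ^ 2 / 4) := by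
  simp only [exp_neg_sq_add_mul_eq]
  rw [integral_const_mul, integral_sub_right_eq_self (fun x : ℝ => Real.exp (-1 * x ^ 2)),
    integral_gaussian, div_one, mul_comm]

section Quadratic

variable [Fintype κ]

lemma integral_prod_exp_neg_sq_add_mul (t : κ → ℝ) :
    ∫ g : κ → ℝ, ∏ k, Real.exp (-g k ^ 2 + t k * g k) =
      √Real.pi ^ Fintype.card κ * Real.exp (1 / 4 * ∑ k, t k ^ 2) := by
  rw [integral_fintype_prod_volume_eq_prod fun k (x : ℝ) => Real.exp (-x ^ 2 + t k * x)]
  simp only [integral_exp_neg_sq_add_mul, prod_mul_distrib, prod_const, card_univ, mul_sum,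
    Real.exp_sum, one_div_mul_eq_div]

lemma expect_prod_exp_neg_sq_add_inner_mul_le {v : κ → EuclideanSpace ℝ ι}
    (hv : Orthonormal ℝ v) (g : κ → ℝ) :
    𝔼 x, ∏ k, Real.exp (-g k ^ 2 + ⟪v k, signVec x⟫ * g k) ≤
      ∏ k, Real.exp (-(1 / 2) * g k ^ 2) := by
  have hnorm : ‖∑ k, g k • v k‖ ^ 2 = ∑ k, g k ^ 2 := by
    rw [← real_inner_self_eq_norm_sq, hv.inner_sum]
    simp only [conj_trivial, sq]
  have hfactor (x : ι → Bool) : ∏ k, Real.exp (-g k ^ 2 + ⟪v k, signVec x⟫ * g k) =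
      Real.exp (-∑ k, g k ^ 2) * Real.exp ⟪∑ k, g k • v k, signVec x⟫ := by
    rw [← Real.exp_sum, ← Real.exp_add, sum_inner, sum_add_distrib, sum_neg_distrib]
    simp only [real_inner_smul_left, mul_comm]
  calc 𝔼 x, ∏ k, Real.exp (-g k ^ 2 + ⟪v k, signVec x⟫ * g k)
      ≤ Real.exp (-∑ k, g k ^ 2) * Real.exp (‖∑ k, g k • v k‖ ^ 2 / 2) := by
        simp only [hfactor, ← mul_expect]
        gcongr
        exact expect_exp_inner_signVec_le _
    _ = ∏ k, Real.exp (-(1 / 2) * g k ^ 2) := by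
        rw [hnorm, ← Real.exp_add, ← Real.exp_sum, ← mul_sum]
        ring_nf

/-- Linearization: `exp (t ^ 2 / 4)` is a Gaussian average of exponentials of multiples of `t`. -/
lemma expect_exp_sum_inner_signVec_sq_le {v : κ → EuclideanSpace ℝ ι} (hv : Orthonormal ℝ v) :
    𝔼 x, Real.exp (1 / 4 * ∑ k, ⟪v k, signVec x⟫ ^ 2) ≤ √2 ^ Fintype.card κ := by
  have hint (x : ι → Bool) :
      Integrable fun g : κ → ℝ => ∏ k, Real.exp (-g k ^ 2 + ⟪v k, signVec x⟫ * g k) :=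
    Integrable.fintype_prod fun k => integrable_exp_neg_sq_add_mul _
  have hgauss : ∫ g : κ → ℝ, ∏ k, Real.exp (-(1 / 2) * g k ^ 2) =
      √Real.pi ^ Fintype.card κ * √2 ^ Fintype.card κ := by
    rw [integral_fintype_prod_volume_eq_pow fun x : ℝ => Real.exp (-(1 / 2) * x ^ 2),
      integral_gaussian, ← mul_pow, ← Real.sqrt_mul Real.pi_pos.le, div_div_eq_mul_div, div_one]
  refine le_of_mul_le_mul_left ?_ (by positivity : 0 < √Real.pi ^ Fintype.card κ)
  calc √Real.pi ^ Fintype.card κ * 𝔼 x, Real.exp (1 / 4 * ∑ k, ⟪v k, signVec x⟫ ^ 2)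
      = ∫ g : κ → ℝ, 𝔼 x, ∏ k, Real.exp (-g k ^ 2 + ⟪v k, signVec x⟫ * g k) := by
        simp only [Fintype.expect_eq_sum_div_card]
        rw [integral_div, integral_finsetSum _ fun x _ => hint x]
        simp only [integral_prod_exp_neg_sq_add_mul]
        rw [← mul_sum, mul_div_assoc]
    _ ≤ ∫ g : κ → ℝ, ∏ k, Real.exp (-(1 / 2) * g k ^ 2) := by
        refine integral_mono ?_
          (Integrable.fintype_prod fun _ => integrable_exp_neg_mul_sq one_half_pos)
          (expect_prod_exp_neg_sq_add_inner_mul_le hv)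
        simp only [Fintype.expect_eq_sum_div_card]
        exact (integrable_finsetSum _ fun x _ => hint x).div_const _
    _ = √Real.pi ^ Fintype.card κ * √2 ^ Fintype.card κ := hgauss

end Quadratic

end RandomSigns

/-! ### Frames close to an orthonormal basis -/

section Frame

open Module (finrank)

variable {ι E : Type*} [Fintype ι] [NormedAddCommGroup E] [InnerProductSpace ℝ E]
  [FiniteDimensional ℝ E]

lemma exists_orthonormalBasis_sum_inner_sq_eq (r : ι → E) :
    ∃ b : OrthonormalBasis (Fin (finrank ℝ E)) ℝ E, ∀ x,
      ∑ i, ⟪r i, x⟫ ^ 2 = ∑ k, (∑ i, ⟪r i, b k⟫ ^ 2) * ⟪b k, x⟫ ^ 2 := by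
  let S : E →ₗ[ℝ] E := ∑ i, (innerₛₗ ℝ (r i)).smulRight (r i)
  have inner_S (x y : E) : ⟪S x, y⟫ = ∑ i, ⟪r i, x⟫ * ⟪r i, y⟫ := by
    simp only [S, LinearMap.sum_apply, LinearMap.smulRight_apply, innerₛₗ_apply_apply, sum_inner,
      real_inner_smul_left]
  have hS : S.IsSymmetric := fun x y => by
    rw [inner_S, real_inner_comm, inner_S]
    simp only [mul_comm]
  let b := hS.eigenvectorBasis rfl
  refine ⟨b, fun x => ?_⟩
  have inner_S_b (k) (y : E) : ⟪S (b k), y⟫ = hS.eigenvalues rfl k * ⟪b k, y⟫ := by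
    rw [hS.apply_eigenvectorBasis, real_inner_smul_left]
    rfl
  have eigenvalue_eq (k) : hS.eigenvalues rfl k = ∑ i, ⟪r i, b k⟫ ^ 2 := by
    simp only [sq, ← inner_S, inner_S_b, real_inner_self_eq_norm_sq, b.norm_eq_one, mul_one]
  calc ∑ i, ⟪r i, x⟫ ^ 2 = ⟪S x, x⟫ := by simp only [inner_S, sq]
    _ = ∑ k, ⟪S x, b k⟫ * ⟪b k, x⟫ := (b.sum_inner_mul_inner _ _).symm
    _ = ∑ k, (∑ i, ⟪r i, b k⟫ ^ 2) * ⟪b k, x⟫ ^ 2 := sum_congr rfl fun k _ => by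
        rw [hS, real_inner_comm, inner_S_b, eigenvalue_eq]
        ring

lemma sq_div_four_le_sum_sub_sq {a c : ι → ℝ} {η : ℝ} (hη : 0 ≤ η) (hη1 : η ≤ 1)
    (ha : ∑ i, a i ^ 2 = 1) (hc : ∑ i, c i ^ 2 ≤ 1 - η) : η ^ 2 / 4 ≤ ∑ i, (c i - a i) ^ 2 := by
  have ptwise (i) : η / 2 * a i ^ 2 - η / (2 - η) * c i ^ 2 ≤ (c i - a i) ^ 2 := by
    have : 0 < 2 - η := by linarith
    have hid : (c i - a i) ^ 2 - (η / 2 * a i ^ 2 - η / (2 - η) * c i ^ 2) =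
        ((1 - η / 2) * a i - c i) ^ 2 / (1 - η / 2) := by
      have : 1 - η / 2 ≠ 0 := by linarith
      field_simp
      ring
    have := div_nonneg (sq_nonneg ((1 - η / 2) * a i - c i)) (by linarith : 0 ≤ 1 - η / 2)
    linarith
  calc η ^ 2 / 4 ≤ η / 2 - η / (2 - η) * (1 - η) := by
        rw [div_mul_eq_mul_div, le_sub_iff_add_le, ← le_sub_iff_add_le', div_le_iff₀ (by linarith)]
        nlinarith [pow_nonneg hη 3]
    _ ≤ η / 2 * ∑ i, a i ^ 2 - η / (2 - η) * ∑ i, c i ^ 2 := by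
        rw [ha, mul_one]
        have : 0 ≤ η / (2 - η) := div_nonneg hη (by linarith)
        gcongr
    _ ≤ ∑ i, (c i - a i) ^ 2 := by
        rw [mul_sum, mul_sum, ← sum_sub_distrib]
        exact sum_le_sum fun i _ => ptwise i

/-- `s` indexes the eigenvectors of the frame operator whose eigenvalue is below `1 - η`. -/
lemma exists_orthonormalBasis_mul_norm_sq_sub_le (e : OrthonormalBasis ι ℝ E) (r : ι → E) {η : ℝ}
    (hη : 0 ≤ η) (hη1 : η ≤ 1) :
    ∃ (b : OrthonormalBasis (Fin (finrank ℝ E)) ℝ E) (s : Finset (Fin (finrank ℝ E))),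
      #s * (η ^ 2 / 4) ≤ ∑ i, ‖r i - e i‖ ^ 2 ∧
      ∀ x, (1 - η) * (‖x‖ ^ 2 - ∑ k ∈ s, ⟪b k, x⟫ ^ 2) ≤ ∑ i, ⟪r i, x⟫ ^ 2 := by
  obtain ⟨b, hb⟩ := exists_orthonormalBasis_sum_inner_sq_eq r
  have parseval (x : E) : ‖x‖ ^ 2 = ∑ k, ⟪b k, x⟫ ^ 2 := by
    simpa only [Real.norm_eq_abs, sq_abs] using (b.sum_sq_norm_inner_right x).symm
  let lam (k) : ℝ := ∑ i, ⟪r i, b k⟫ ^ 2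
  have lam_nonneg (k) : 0 ≤ lam k := sum_nonneg fun i _ => sq_nonneg _
  let s : Finset (Fin (finrank ℝ E)) := {k | lam k < 1 - η}
  refine ⟨b, s, ?_, fun x => ?_⟩
  · have hs : ∀ k ∈ s, η ^ 2 / 4 ≤ ∑ i, ⟪b k, r i - e i⟫ ^ 2 := fun k hk => by
      simp only [real_inner_comm (_ - _), inner_sub_left]
      refine sq_div_four_le_sum_sub_sq hη hη1 ?_ (mem_filter.mp hk).2.le
      simpa using e.sum_sq_norm_inner_right (b k)
    calc #s * (η ^ 2 / 4) = ∑ _k ∈ s, η ^ 2 / 4 := by rw [sum_const, nsmul_eq_mul]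
      _ ≤ ∑ k ∈ s, ∑ i, ⟪b k, r i - e i⟫ ^ 2 := sum_le_sum hs
      _ ≤ ∑ k, ∑ i, ⟪b k, r i - e i⟫ ^ 2 :=
          sum_le_univ_sum_of_nonneg fun k => sum_nonneg fun i _ => sq_nonneg _
      _ = ∑ i, ‖r i - e i‖ ^ 2 := by
          rw [sum_comm]
          simp only [parseval]
  · have hsplit := sum_add_sum_compl s fun k => ⟪b k, x⟫ ^ 2
    calc (1 - η) * (‖x‖ ^ 2 - ∑ k ∈ s, ⟪b k, x⟫ ^ 2) = ∑ k ∈ sᶜ, (1 - η) * ⟪b k, x⟫ ^ 2 := by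
          rw [parseval, ← hsplit, add_sub_cancel_left, mul_sum]
      _ ≤ ∑ k ∈ sᶜ, lam k * ⟪b k, x⟫ ^ 2 := sum_le_sum fun k hk => by
          have : 1 - η ≤ lam k := by simpa [s] using hk
          gcongr
      _ ≤ ∑ k, lam k * ⟪b k, x⟫ ^ 2 :=
          sum_le_univ_sum_of_nonneg fun k => mul_nonneg (lam_nonneg k) (sq_nonneg _)
      _ = ∑ i, ⟪r i, x⟫ ^ 2 := (hb x).symm

lemma uniformProb_sum_inner_signVec_sq_lt_le [DecidableEq ι] (r : ι → EuclideanSpace ℝ ι) {η : ℝ}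
    (hη : 0 < η) (hη1 : η ≤ 1)
    (hr : ∑ i, ‖r i - EuclideanSpace.basisFun ι ℝ i‖ ^ 2 ≤ η ^ 3 / 16 * Fintype.card ι) :
    uniformProb univ (fun x => ∑ i, ⟪r i, signVec x⟫ ^ 2 < (1 - η) ^ 2 * Fintype.card ι) ≤
      Real.exp (-(η * Fintype.card ι / 8)) := by
  obtain ⟨b, s, hs, hb⟩ := exists_orthonormalBasis_mul_norm_sq_sub_le
    (EuclideanSpace.basisFun ι ℝ) r hη.le hη1
  set N : ℝ := (Fintype.card ι : ℝ) with hN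
  have hcard : (Fintype.card s : ℝ) ≤ η * N / 4 := by
    rw [Fintype.card_coe]
    have : 0 < η ^ 2 / 4 := by positivity
    refine le_of_mul_le_mul_right ?_ this
    linarith
  have hmoment := (expect_exp_sum_inner_signVec_sq_le
    (b.orthonormal.comp ((↑) : s → _) Subtype.val_injective)).trans (sqrt_two_pow_le hcard)
  calc uniformProb univ (fun x => ∑ i, ⟪r i, signVec x⟫ ^ 2 < (1 - η) ^ 2 * N)
      ≤ 𝔼 x, Real.exp (-(η * N / 4)) * Real.exp (1 / 4 * ∑ k : s, ⟪b k, signVec x⟫ ^ 2) := by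
        refine uniformProb_le_expect (fun x _ => by positivity) fun x _ hx => ?_
        have hlow := (hb (signVec x)).trans_lt hx
        rw [norm_signVec_sq, ← hN, ← sum_coe_sort s] at hlow
        rw [← Real.exp_add]
        refine Real.one_le_exp ?_
        have : (1 - η) * (η * N - ∑ k : s, ⟪b k, signVec x⟫ ^ 2) < 0 := by linarith
        linarith [neg_of_mul_neg_right this (by linarith)]
    _ ≤ Real.exp (-(η * N / 4)) * Real.exp (η * N / 4 / 2) := by
        rw [← mul_expect]
        gcongr
        exact hmoment
    _ = Real.exp (-(η * N / 8)) := by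
        rw [← Real.exp_add]
        ring_nf

end Frame

/-! ### Sign sequences under the uniform measure on a finite set -/

/-- A sequence of `±1`-valued functions on `Ω`, the successive signs of a point of `Ω`. -/
structure SignSequence (Ω : Type*) where
  toFun : ℕ → Ω → ℝ
  sq_eq_one' : ∀ k ω, toFun k ω ^ 2 = 1

namespace SignSequence

variable {Ω α β γ ι : Type*}

instance : CoeFun (SignSequence Ω) fun _ => ℕ → Ω → ℝ := ⟨toFun⟩

variable (X : SignSequence Ω)

lemma sq_eq_one (k : ℕ) (y : Ω) : X k y ^ 2 = 1 := X.sq_eq_one' k y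

lemma eq_one_or_neg_one (k : ℕ) (y : Ω) : X k y = 1 ∨ X k y = -1 :=
  sq_eq_one_iff.mp (X.sq_eq_one k y)

lemma abs_eq_one (k : ℕ) (y : Ω) : |X k y| = 1 :=
  (abs_eq zero_le_one).mpr (X.eq_one_or_neg_one k y)

/-- `φ` depends only on the first `k` signs: measurability for the natural filtration of `X`. -/
def PrefixMeas (k : ℕ) (φ : Ω → β) : Prop :=
  ∀ ⦃y z⦄, (∀ j < k, X j y = X j z) → φ y = φ z

open Classical in
/-- The points of `B` sharing their first `k` signs with `y`: the atom of the natural filtration of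
`X` at `y`, under the uniform measure on `B`. -/
noncomputable def fiber (B : Finset Ω) (k : ℕ) (y : Ω) : Finset Ω :=
  {z ∈ B | ∀ j < k, X j y = X j z}

/-- Conditional expectation given the first `k` signs, under the uniform measure on `B`. Off `B` the
fiber may be empty, and the value is then `0`. -/
noncomputable def condMean (B : Finset Ω) (k : ℕ) (g : Ω → ℝ) (y : Ω) : ℝ :=
  𝔼 z ∈ X.fiber B k y, g z

/-- Conditional mean of the `k`-th sign given the preceding ones. -/
noncomputable def bias (B : Finset Ω) (k : ℕ) (y : Ω) : ℝ := X.condMean B k (X k) y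

/-- The martingale difference of the `k`-th sign. -/
noncomputable def innovation (B : Finset Ω) (k : ℕ) (y : Ω) : ℝ := X k y - X.bias B k y

/-- Conditional variance of the `k`-th sign given the preceding ones. -/
noncomputable def condVar (B : Finset Ω) (k : ℕ) (y : Ω) : ℝ := 1 - X.bias B k y ^ 2

/-- Coefficient of the conditional linear regression of `g` on the `k`-th innovation; it is `0`
where the conditional variance vanishes. -/
noncomputable def regCoef (B : Finset Ω) (k : ℕ) (g : Ω → ℝ) (y : Ω) : ℝ :=
  X.condMean B k (fun z => X.innovation B k z * g z) y / X.condVar B k y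

variable {X} {B : Finset Ω} {k l n : ℕ} {φ : Ω → ℝ} {y z : Ω}

namespace PrefixMeas

lemma mono (hkl : k ≤ l) {φ : Ω → β} (h : X.PrefixMeas k φ) : X.PrefixMeas l φ :=
  fun _ _ hyz => h fun j hj => hyz j (hj.trans_le hkl)

lemma const (b : β) : X.PrefixMeas k fun _ => b := fun _ _ _ => rfl

lemma map {φ : Ω → α} (h : X.PrefixMeas k φ) (F : α → β) : X.PrefixMeas k fun y => F (φ y) :=
  fun _ _ hyz => congrArg F (h hyz)

lemma map₂ {φ : Ω → α} {ψ : Ω → β} (hφ : X.PrefixMeas k φ) (hψ : X.PrefixMeas k ψ)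
    (F : α → β → γ) : X.PrefixMeas k fun y => F (φ y) (ψ y) :=
  fun _ _ hyz => congrArg₂ F (hφ hyz) (hψ hyz)

lemma sum {s : Finset ι} {φ : ι → Ω → ℝ} (h : ∀ i ∈ s, X.PrefixMeas k (φ i)) :
    X.PrefixMeas k fun y => ∑ i ∈ s, φ i y :=
  fun _ _ hyz => sum_congr rfl fun i hi => h i hi hyz

lemma prod {s : Finset ι} {φ : ι → Ω → ℝ} (h : ∀ i ∈ s, X.PrefixMeas k (φ i)) :
    X.PrefixMeas k fun y => ∏ i ∈ s, φ i y :=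
  fun _ _ hyz => prod_congr rfl fun i hi => h i hi hyz

end PrefixMeas

lemma prefixMeas_apply (h : k < l) : X.PrefixMeas l (X k) := fun _ _ hyz => hyz k h

lemma mem_fiber : z ∈ X.fiber B k y ↔ z ∈ B ∧ ∀ j < k, X j y = X j z := by
  simp only [fiber, mem_filter]

lemma fiber_nonempty (hy : y ∈ B) : (X.fiber B k y).Nonempty :=
  ⟨y, mem_fiber.mpr ⟨hy, fun _ _ => rfl⟩⟩

lemma prefixMeas_fiber : X.PrefixMeas k (X.fiber B k) := by
  intro y z hyz
  ext w
  simp only [mem_fiber]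
  exact and_congr_right fun _ => forall₂_congr fun j hj => by rw [hyz j hj]

lemma prefixMeas_condMean (g : Ω → ℝ) : X.PrefixMeas k (X.condMean B k g) :=
  prefixMeas_fiber.map fun s => 𝔼 z ∈ s, g z

lemma prefixMeas_bias : X.PrefixMeas k (X.bias B k) := prefixMeas_condMean _

lemma prefixMeas_condVar : X.PrefixMeas k (X.condVar B k) := prefixMeas_bias.map fun b => 1 - b ^ 2

lemma prefixMeas_innovation (h : k < l) : X.PrefixMeas l (X.innovation B k) :=
  (prefixMeas_apply h).map₂ (prefixMeas_bias.mono h.le) fun x b => x - b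

lemma prefixMeas_regCoef (g : Ω → ℝ) : X.PrefixMeas k (X.regCoef B k g) :=
  (prefixMeas_condMean _).map₂ prefixMeas_condVar fun a b => a / b

lemma condMean_mul_left (hφ : X.PrefixMeas k φ) (g : Ω → ℝ) (y : Ω) :
    X.condMean B k (fun z => φ z * g z) y = φ y * X.condMean B k g y := by
  rw [condMean, condMean, mul_expect]
  exact expect_congr rfl fun z hz => by rw [hφ (mem_fiber.mp hz).2]

lemma expect_condMean (g : Ω → ℝ) : 𝔼 y ∈ B, X.condMean B k g y = 𝔼 y ∈ B, g y := by
  suffices ∑ y ∈ B, X.condMean B k g y = ∑ y ∈ B, g y by simp only [expect_eq_sum_div_card, this]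
  have swap : ∀ y z, y ∈ B ∧ z ∈ X.fiber B k y ↔ y ∈ X.fiber B k z ∧ z ∈ B := fun y z => by
    simp only [mem_fiber, eq_comm]
    tauto
  calc ∑ y ∈ B, X.condMean B k g y
      = ∑ y ∈ B, ∑ z ∈ X.fiber B k y, g z / #(X.fiber B k y) := by
        simp only [condMean, expect_eq_sum_div_card, sum_div]
    _ = ∑ z ∈ B, ∑ y ∈ X.fiber B k z, g z / #(X.fiber B k y) := sum_comm' swap
    _ = ∑ z ∈ B, ∑ _y ∈ X.fiber B k z, g z / #(X.fiber B k z) :=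
        sum_congr rfl fun z _ => sum_congr rfl fun y hy => by
          rw [prefixMeas_fiber (mem_fiber.mp hy).2]
    _ = ∑ z ∈ B, g z := sum_congr rfl fun z hz => by
        rw [sum_const, nsmul_eq_mul, mul_div_cancel₀]
        exact_mod_cast (fiber_nonempty hz).card_pos.ne'

lemma expect_mul_condMean (hφ : X.PrefixMeas k φ) (g : Ω → ℝ) :
    𝔼 y ∈ B, φ y * X.condMean B k g y = 𝔼 y ∈ B, φ y * g y := by
  simp only [← condMean_mul_left hφ, expect_condMean]

lemma condMean_apply_sign {F : Ω → ℝ → ℝ} (hF : X.PrefixMeas k F) (hy : y ∈ B) :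
    X.condMean B k (fun z => F z (X k z)) y =
      (1 + X.bias B k y) / 2 * F y 1 + (1 - X.bias B k y) / 2 * F y (-1) := by
  have affine : ∀ z ∈ X.fiber B k y,
      F z (X k z) = (F y 1 + F y (-1)) / 2 + (F y 1 - F y (-1)) / 2 * X k z := fun z hz => by
    rw [← hF (mem_fiber.mp hz).2]
    rcases X.eq_one_or_neg_one k z with h | h <;> rw [h] <;> ring
  rw [condMean, expect_congr rfl affine, expect_add_distrib, expect_const (fiber_nonempty hy),
    ← mul_expect, ← condMean, ← bias]
  ring

lemma abs_bias_le (k : ℕ) (y : Ω) : |X.bias B k y| ≤ 1 := by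
  refine (abs_expect_le _ _).trans ?_
  simp only [X.abs_eq_one]
  rcases (X.fiber B k y).eq_empty_or_nonempty with h | h
  · simp [h]
  · rw [expect_const h]

lemma condVar_nonneg (k : ℕ) (y : Ω) : 0 ≤ X.condVar B k y :=
  sub_nonneg.mpr ((sq_le_one_iff_abs_le_one _).mpr (abs_bias_le k y))

lemma condVar_le_one (k : ℕ) (y : Ω) : X.condVar B k y ≤ 1 := sub_le_self _ (sq_nonneg _)

lemma abs_innovation_le (k : ℕ) (y : Ω) : |X.innovation B k y| ≤ 2 := by
  have := (abs_sub (X k y) (X.bias B k y)).trans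
    (add_le_add (X.abs_eq_one k y).le (abs_bias_le (B := B) k y))
  rw [innovation]
  linarith

lemma expect_mul_apply_sign {F : Ω → ℝ → ℝ} (hF : X.PrefixMeas k F) (hφ : X.PrefixMeas k φ) :
    𝔼 y ∈ B, φ y * F y (X k y) = 𝔼 y ∈ B, φ y *
      ((1 + X.bias B k y) / 2 * F y 1 + (1 - X.bias B k y) / 2 * F y (-1)) := by
  rw [← expect_mul_condMean hφ]
  exact expect_congr rfl fun y hy => by rw [condMean_apply_sign hF hy]

lemma expect_mul_innovation (hφ : X.PrefixMeas k φ) :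
    𝔼 y ∈ B, φ y * X.innovation B k y = 0 := by
  refine (expect_mul_apply_sign (prefixMeas_bias.map fun b x => x - b) hφ).trans ?_
  exact expect_eq_zero fun y _ => by ring

lemma expect_mul_innovation_sq (hφ : X.PrefixMeas k φ) :
    𝔼 y ∈ B, φ y * X.innovation B k y ^ 2 = 𝔼 y ∈ B, φ y * X.condVar B k y := by
  refine (expect_mul_apply_sign (prefixMeas_bias.map fun b x => (x - b) ^ 2) hφ).trans ?_
  exact expect_congr rfl fun y _ => by rw [condVar]; ring

/-- Where the conditional variance vanishes, so does the innovation: the regression identity holds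
there too, despite the junk value of the quotient. -/
lemma condMean_innovation_mul (g : Ω → ℝ) (hy : y ∈ B) :
    X.condMean B k (fun z => X.innovation B k z * g z) y =
      X.condVar B k y * X.regCoef B k g y := by
  rcases eq_or_ne (X.condVar B k y) 0 with h0 | h0
  · have mean_sq : X.condMean B k (fun z => X.innovation B k z ^ 2) y = 0 := by
      refine (condMean_apply_sign (prefixMeas_bias.map fun b x => (x - b) ^ 2) hy).trans ?_
      rw [condVar] at h0
      linear_combination h0
    rw [condMean, expect_eq_zero_iff_of_nonneg fun z _ => sq_nonneg _] at mean_sq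
    rw [h0, zero_mul]
    exact expect_eq_zero fun z hz => by
      rw [pow_eq_zero_iff two_ne_zero |>.mp (mean_sq z hz), zero_mul]
  · rw [regCoef, mul_div_cancel₀ _ h0]

lemma expect_mul_innovation_mul (hφ : X.PrefixMeas k φ) (g : Ω → ℝ) :
    𝔼 y ∈ B, φ y * (X.innovation B k y * g y) =
      𝔼 y ∈ B, φ y * (X.condVar B k y * X.regCoef B k g y) := by
  rw [← expect_mul_condMean hφ]
  exact expect_congr rfl fun y hy => by rw [condMean_innovation_mul g hy]

lemma regCoef_sum_mul (s : Finset ι) (a : ι → ℝ) (g : ι → Ω → ℝ) (y : Ω) :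
    X.regCoef B k (fun z => ∑ i ∈ s, a i * g i z) y = ∑ i ∈ s, a i * X.regCoef B k (g i) y := by
  simp only [regCoef, condMean, mul_sum, expect_sum_comm, sum_div, mul_div_assoc', mul_expect,
    mul_left_comm]

lemma regCoef_self (hy : y ∈ B) (h : X.condVar B k y ≠ 0) : X.regCoef B k (X k) y = 1 := by
  rw [regCoef, div_eq_one_iff_eq h]
  refine (condMean_apply_sign (prefixMeas_bias.map fun b x => (x - b) * x) hy).trans ?_
  rw [condVar]
  ring

lemma sum_expect_condVar_mul_regCoef_sq_le (n : ℕ) (g : Ω → ℝ) :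
    ∑ k ∈ range n, 𝔼 y ∈ B, X.condVar B k y * X.regCoef B k g y ^ 2 ≤ 𝔼 y ∈ B, g y ^ 2 := by
  let proj (n : ℕ) (y : Ω) : ℝ := ∑ k ∈ range n, X.regCoef B k g y * X.innovation B k y
  have proj_meas (n) : X.PrefixMeas n (proj n) := PrefixMeas.sum fun k hk =>
    ((prefixMeas_regCoef g).mono (mem_range.mp hk).le).map₂
      (prefixMeas_innovation (mem_range.mp hk)) (· * ·)
  suffices residual : 𝔼 y ∈ B, (g y - proj n y) ^ 2 =
      𝔼 y ∈ B, g y ^ 2 - ∑ k ∈ range n, 𝔼 y ∈ B, X.condVar B k y * X.regCoef B k g y ^ 2 by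
    linarith [expect_nonneg (s := B) fun y _ => sq_nonneg (g y - proj n y)]
  induction n with
  | zero => simp [proj]
  | succ n ih =>
    have coef_meas : X.PrefixMeas n (X.regCoef B n g) := prefixMeas_regCoef g
    have cross := expect_mul_innovation_mul (B := B) coef_meas g
    have square := expect_mul_innovation_sq (B := B) (coef_meas.map (· ^ 2))
    have orthogonal := expect_mul_innovation (B := B) (coef_meas.map₂ (proj_meas n) (· * ·))
    have expand (y : Ω) : (g y - proj (n + 1) y) ^ 2 = (g y - proj n y) ^ 2
        - 2 * (X.regCoef B n g y * (X.innovation B n y * g y))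
        + 2 * (X.regCoef B n g y * proj n y * X.innovation B n y)
        + X.regCoef B n g y ^ 2 * X.innovation B n y ^ 2 := by
      simp only [proj, sum_range_succ]
      ring
    have hsq (y : Ω) : X.regCoef B n g y * (X.condVar B n y * X.regCoef B n g y) =
        X.condVar B n y * X.regCoef B n g y ^ 2 := by ring
    simp only [expand, expect_add_distrib, expect_sub_distrib, ← mul_expect, ih, cross, square,
      orthogonal, sum_range_succ, hsq, mul_comm (_ ^ 2) (X.condVar B n _)]
    ring

/-! ### Entropy deficiency -/

lemma two_mul_card_fiber_succ (k : ℕ) (y : Ω) :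
    2 * (#(X.fiber B (k + 1) y) : ℝ) = #(X.fiber B k y) * (1 + X.bias B k y * X k y) := by
  classical
  have hfilter : X.fiber B (k + 1) y = {z ∈ X.fiber B k y | X k y = X k z} := by
    ext z
    simp only [mem_filter, mem_fiber, Nat.forall_lt_succ_right, and_assoc]
  have hind : ∀ z, (if X k y = X k z then 1 else 0 : ℝ) = (1 + X k z * X k y) / 2 := fun z => by
    rcases X.eq_one_or_neg_one k y with hy | hy <;>
      rcases X.eq_one_or_neg_one k z with hz | hz <;> norm_num [hy, hz]
  have hsum : (#(X.fiber B k y) : ℝ) * X.bias B k y = ∑ z ∈ X.fiber B k y, X k z := by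
    rw [bias, condMean, ← nsmul_eq_mul, card_smul_expect]
  rw [hfilter, card_filter, Nat.cast_sum]
  simp only [Nat.cast_ite, Nat.cast_one, Nat.cast_zero, hind]
  rw [← sum_div, sum_add_distrib, ← sum_mul, ← hsum, sum_const, nsmul_eq_mul]
  ring

lemma one_add_bias_mul_pos (k : ℕ) (hy : y ∈ B) : 0 < 1 + X.bias B k y * X k y := by
  have hcard (j : ℕ) : (0 : ℝ) < #(X.fiber B j y) := by exact_mod_cast (fiber_nonempty hy).card_pos
  refine pos_of_mul_pos_right ?_ (hcard k).le
  rw [← two_mul_card_fiber_succ]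
  linarith [hcard (k + 1)]

lemma card_mul_prod_one_add_bias_mul (n : ℕ) (y : Ω) :
    #B * ∏ k ∈ range n, (1 + X.bias B k y * X k y) = 2 ^ n * (#(X.fiber B n y) : ℝ) := by
  induction n with
  | zero => simp [fiber]
  | succ n ih =>
    rw [prod_range_succ, ← mul_assoc, ih, pow_succ, mul_assoc, mul_assoc, two_mul_card_fiber_succ]

lemma sum_log_one_add_bias_mul (hB : Set.InjOn (fun y (j : Fin n) => X j y) B) (hy : y ∈ B) :
    ∑ k ∈ range n, Real.log (1 + X.bias B k y * X k y) = Real.log (2 ^ n / #B) := by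
  have hfiber : X.fiber B n y = {y} := by
    refine eq_singleton_iff_unique_mem.mpr ⟨mem_fiber.mpr ⟨hy, fun _ _ => rfl⟩, fun z hz => ?_⟩
    obtain ⟨hzB, hz⟩ := mem_fiber.mp hz
    exact hB hzB hy (funext fun j => (hz j j.2).symm)
  have hcard : (#B : ℝ) ≠ 0 := by exact_mod_cast (card_pos.mpr ⟨y, hy⟩).ne'
  rw [← Real.log_prod fun k _ => (one_add_bias_mul_pos k hy).ne']
  congr 1
  rw [eq_div_iff hcard, mul_comm, card_mul_prod_one_add_bias_mul, hfiber, card_singleton,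
    Nat.cast_one, mul_one]

open InformationTheory in
lemma expect_bias_sq_le (k : ℕ) :
    𝔼 y ∈ B, X.bias B k y ^ 2 ≤ 6 * 𝔼 y ∈ B, Real.log (1 + X.bias B k y * X k y) := by
  have hlog := expect_mul_apply_sign (B := B)
    ((prefixMeas_bias (X := X) (B := B) (k := k)).map fun b x => Real.log (1 + b * x))
    (PrefixMeas.const 1)
  simp only [one_mul, mul_one, mul_neg, ← sub_eq_add_neg] at hlog
  rw [hlog, mul_expect]
  refine expect_le_expect fun y _ => ?_
  obtain ⟨hlo, hhi⟩ := abs_le.mp (X.abs_bias_le (B := B) k y)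
  have hadd := sq_sub_one_div_six_le_klFun (t := 1 + X.bias B k y) (by linarith) (by linarith)
  have hsub := sq_sub_one_div_six_le_klFun (t := 1 - X.bias B k y) (by linarith) (by linarith)
  rw [klFun] at hadd hsub
  linarith

lemma sum_expect_bias_sq_le (hB : Set.InjOn (fun y (j : Fin n) => X j y) B)
    (hne : B.Nonempty) :
    ∑ k ∈ range n, 𝔼 y ∈ B, X.bias B k y ^ 2 ≤ 6 * Real.log (2 ^ n / #B) :=
  calc ∑ k ∈ range n, 𝔼 y ∈ B, X.bias B k y ^ 2
      ≤ ∑ k ∈ range n, 6 * 𝔼 y ∈ B, Real.log (1 + X.bias B k y * X k y) :=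
        sum_le_sum fun k _ => expect_bias_sq_le k
    _ = 6 * 𝔼 _y ∈ B, Real.log (2 ^ n / #B) := by
        rw [← mul_sum, ← expect_sum_comm]
        exact congrArg _ (expect_congr rfl fun y hy => sum_log_one_add_bias_mul hB hy)
    _ = 6 * Real.log (2 ^ n / #B) := by rw [expect_const hne]

variable (X)

/-- The coefficients of the first `n` signs regressed on the `k`-th innovation, as a vector. -/
noncomputable def rowVec (B : Finset Ω) (n k : ℕ) (y : Ω) : EuclideanSpace ℝ (Fin n) :=
  WithLp.toLp 2 fun j => X.regCoef B k (X j) y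

/-- The squared norm of the off-diagonal part of `rowVec`. -/
noncomputable def offSq (B : Finset Ω) (k : Fin n) (y : Ω) : ℝ :=
  ∑ j ∈ univ.erase k, X.rowVec B n k y j ^ 2

/-- How far, at `y`, the first `n` signs are from being independent and unbiased under the uniform
measure on `B`; it dominates the squared Hilbert–Schmidt distance of the `frameVec` to the standard
basis. -/
noncomputable def deviation (B : Finset Ω) (n : ℕ) (y : Ω) : ℝ :=
  ∑ k : Fin n, (X.bias B k y ^ 2 + X.condVar B k y * X.offSq B k y)

variable {X}

lemma offSq_nonneg (k : Fin n) (y : Ω) : 0 ≤ X.offSq B k y := sum_nonneg fun _ _ => sq_nonneg _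

lemma deviation_nonneg (n : ℕ) (y : Ω) : 0 ≤ X.deviation B n y :=
  sum_nonneg fun k _ =>
    add_nonneg (sq_nonneg _) (mul_nonneg (condVar_nonneg k y) (offSq_nonneg k y))

lemma condVar_mul_regCoef_self_sq (hy : y ∈ B) :
    X.condVar B k y * X.regCoef B k (X k) y ^ 2 = X.condVar B k y := by
  rcases eq_or_ne (X.condVar B k y) 0 with h | h
  · rw [h, zero_mul]
  · rw [regCoef_self hy h, one_pow, mul_one]

/-- The `j`-th term of Bessel's inequality for the `j`-th sign is `1 - 𝔼 bias ^ 2`. -/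
lemma sum_erase_expect_condVar_mul_regCoef_sq_le (j : Fin n) :
    ∑ k ∈ univ.erase j, 𝔼 y ∈ B, X.condVar B k y * X.regCoef B k (X j) y ^ 2
      ≤ 𝔼 y ∈ B, X.bias B j y ^ 2 := by
  have hbessel := sum_expect_condVar_mul_regCoef_sq_le (X := X) (B := B) n (X j)
  rw [← Fin.sum_univ_eq_sum_range fun k =>
    𝔼 y ∈ B, X.condVar B k y * X.regCoef B k (X j) y ^ 2, ← add_sum_erase _ _ (mem_univ j),
    expect_congr rfl fun y hy => condVar_mul_regCoef_self_sq hy] at hbessel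
  have hvar : 𝔼 y ∈ B, X.condVar B j y = 𝔼 y ∈ B, X j y ^ 2 - 𝔼 y ∈ B, X.bias B j y ^ 2 := by
    simp only [condVar, expect_sub_distrib, X.sq_eq_one]
  linarith

lemma sum_expect_condVar_mul_offSq_le (n : ℕ) :
    ∑ k : Fin n, 𝔼 y ∈ B, X.condVar B k y * X.offSq B k y
      ≤ ∑ k : Fin n, 𝔼 y ∈ B, X.bias B k y ^ 2 :=
  calc ∑ k : Fin n, 𝔼 y ∈ B, X.condVar B k y * X.offSq B k y
      = ∑ k : Fin n, ∑ j ∈ univ.erase k, 𝔼 y ∈ B, X.condVar B k y * X.regCoef B k (X j) y ^ 2 := by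
        simp only [offSq, rowVec, mul_sum, expect_sum_comm]
    _ = ∑ j : Fin n, ∑ k ∈ univ.erase j, 𝔼 y ∈ B, X.condVar B k y * X.regCoef B k (X j) y ^ 2 :=
        sum_comm' fun k j => by simp only [mem_erase, mem_univ, and_true, true_and, ne_comm]
    _ ≤ ∑ j : Fin n, 𝔼 y ∈ B, X.bias B j y ^ 2 :=
        sum_le_sum fun j _ => sum_erase_expect_condVar_mul_regCoef_sq_le j

lemma expect_deviation_le (hB : Set.InjOn (fun y (j : Fin n) => X j y) B) (hne : B.Nonempty) :
    𝔼 y ∈ B, X.deviation B n y ≤ 12 * Real.log (2 ^ n / #B) := by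
  have hbias := sum_expect_bias_sq_le hB hne
  rw [← Fin.sum_univ_eq_sum_range fun k => 𝔼 y ∈ B, X.bias B k y ^ 2] at hbias
  simp only [deviation, expect_sum_comm, expect_add_distrib, sum_add_distrib]
  linarith [sum_expect_condVar_mul_offSq_le (X := X) (B := B) n]

/-! ### Tilted measures -/

variable (X)

/-- The density, relative to the uniform measure on `B`, under which the conditional mean of the
`k`-th innovation is shifted by `u k` times its conditional variance. -/
noncomputable def tilt (B : Finset Ω) (u : ℕ → Ω → ℝ) (n : ℕ) (y : Ω) : ℝ :=
  ∏ k ∈ range n, (1 + u k y * X.innovation B k y)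

/-- The quadratic variation accumulated by the martingale transform `∑ u k * innovation k`. -/
noncomputable def energy (B : Finset Ω) (u : ℕ → Ω → ℝ) (n : ℕ) (y : Ω) : ℝ :=
  ∑ k ∈ range n, X.condVar B k y * u k y ^ 2

variable {X} {u : ℕ → Ω → ℝ} {ρ : ℝ}

lemma prefixMeas_tilt (hu : ∀ k, X.PrefixMeas k (u k)) (n : ℕ) :
    X.PrefixMeas n (X.tilt B u n) :=
  PrefixMeas.prod fun k hk => ((hu k).mono (mem_range.mp hk).le).map₂
    (prefixMeas_innovation (mem_range.mp hk)) fun c e => 1 + c * e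

lemma prefixMeas_energy (hu : ∀ k, X.PrefixMeas k (u k)) (n : ℕ) :
    X.PrefixMeas n (X.energy B u n) :=
  PrefixMeas.sum fun k hk =>
    (prefixMeas_condVar.map₂ (hu k) fun v c => v * c ^ 2).mono (mem_range.mp hk).le

lemma tilt_succ (n : ℕ) (y : Ω) :
    X.tilt B u (n + 1) y = X.tilt B u n y * (1 + u n y * X.innovation B n y) :=
  prod_range_succ _ _

lemma energy_succ (n : ℕ) (y : Ω) :
    X.energy B u (n + 1) y = X.energy B u n y + X.condVar B n y * u n y ^ 2 :=
  sum_range_succ _ _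

lemma prefixMeas_energy_succ (hu : ∀ k, X.PrefixMeas k (u k)) (n : ℕ) :
    X.PrefixMeas n (X.energy B u (n + 1)) := fun y z hyz => by
  rw [energy_succ, energy_succ, prefixMeas_energy hu n hyz, prefixMeas_condVar hyz, hu n hyz]

lemma energy_mono (u : ℕ → Ω → ℝ) (y : Ω) : Monotone fun n => X.energy B u n y :=
  monotone_nat_of_le_succ fun n => by
    rw [energy_succ]
    exact le_add_of_nonneg_right (mul_nonneg (condVar_nonneg n y) (sq_nonneg _))

lemma energy_nonneg (u : ℕ → Ω → ℝ) (n : ℕ) (y : Ω) : 0 ≤ X.energy B u n y :=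
  energy_mono u y n.zero_le

lemma tilt_pos (hρ : ρ < 1) (hbound : ∀ k y, |u k y * X.innovation B k y| ≤ ρ) (n : ℕ) (y : Ω) :
    0 < X.tilt B u n y :=
  prod_pos fun k _ => by linarith [(abs_le.mp (hbound k y)).1]

lemma expect_mul_tilt_of_le (hu : ∀ k, X.PrefixMeas k (u k)) (hφ : X.PrefixMeas k φ)
    (hkn : k ≤ n) : 𝔼 y ∈ B, φ y * X.tilt B u n y = 𝔼 y ∈ B, φ y * X.tilt B u k y := by
  induction n, hkn using Nat.le_induction with
  | base => rfl
  | succ n hkn ih =>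
    have hmean := expect_mul_innovation (B := B) <|
      ((hφ.mono hkn).map₂ (prefixMeas_tilt (B := B) hu n) (· * ·)).map₂ (hu n) (· * ·)
    have expand (y : Ω) : φ y * X.tilt B u (n + 1) y =
        φ y * X.tilt B u n y + φ y * X.tilt B u n y * u n y * X.innovation B n y := by
      rw [tilt_succ]
      ring
    simp only [expand, expect_add_distrib, ih, hmean, add_zero]

lemma expect_tilt (hu : ∀ k, X.PrefixMeas k (u k)) (hB : B.Nonempty) (n : ℕ) :
    𝔼 y ∈ B, X.tilt B u n y = 1 := by
  have h := expect_mul_tilt_of_le (B := B) hu (PrefixMeas.const (X := X) 1) n.zero_le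
  simpa only [one_mul, tilt, range_zero, prod_empty, expect_const hB] using h

lemma expect_tilt_mul (hu : ∀ k, X.PrefixMeas k (u k)) (g : Ω → ℝ) (n : ℕ) :
    𝔼 y ∈ B, X.tilt B u n y * g y = 𝔼 y ∈ B, g y + 𝔼 y ∈ B, X.tilt B u n y *
      ∑ k ∈ range n, X.condVar B k y * (u k y * X.regCoef B k g y) := by
  let shift (n : ℕ) (y : Ω) : ℝ :=
    ∑ k ∈ range n, X.condVar B k y * (u k y * X.regCoef B k g y)
  have shift_meas (n) : X.PrefixMeas n (shift (n + 1)) := PrefixMeas.sum fun k hk =>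
    (prefixMeas_condVar.map₂ ((hu k).map₂ (prefixMeas_regCoef g) (· * ·)) (· * ·)).mono
      (Nat.lt_succ_iff.mp (mem_range.mp hk))
  change _ = 𝔼 y ∈ B, g y + 𝔼 y ∈ B, X.tilt B u n y * shift n y
  induction n with
  | zero => simp [tilt, shift]
  | succ n ih =>
    have hcross := expect_mul_innovation_mul (B := B)
      ((prefixMeas_tilt (B := B) hu n).map₂ (hu n) (· * ·)) g
    have hmart := expect_mul_tilt_of_le (B := B) hu (shift_meas n) (Nat.le_succ n)
    have expand (y : Ω) : X.tilt B u (n + 1) y * g y = X.tilt B u n y * g y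
        + X.tilt B u n y * u n y * (X.innovation B n y * g y) := by
      rw [tilt_succ]
      ring
    have expand_shift (y : Ω) : shift (n + 1) y * X.tilt B u n y = X.tilt B u n y * shift n y
        + X.tilt B u n y * u n y * (X.condVar B n y * X.regCoef B n g y) := by
      simp only [shift, sum_range_succ]
      ring
    simp only [expand, expect_add_distrib, ih, hcross, mul_comm (X.tilt B u (n + 1) _), hmart,
      expand_shift, add_assoc]

lemma expect_tilt_sq_mul_exp_neg_energy_le (hu : ∀ k, X.PrefixMeas k (u k)) (hB : B.Nonempty)
    (n : ℕ) : 𝔼 y ∈ B, X.tilt B u n y ^ 2 * Real.exp (-X.energy B u n y) ≤ 1 := by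
  induction n with
  | zero => simp [tilt, energy, expect_const hB]
  | succ n ih =>
    let ψ (y : Ω) : ℝ := X.tilt B u n y ^ 2 * Real.exp (-X.energy B u (n + 1) y)
    have ψ_meas : X.PrefixMeas n ψ :=
      (prefixMeas_tilt hu n).map₂ (prefixMeas_energy_succ hu n) fun t e => t ^ 2 * Real.exp (-e)
    have hmean := expect_mul_innovation (B := B) (ψ_meas.map₂ (hu n) (· * ·))
    have hsq := expect_mul_innovation_sq (B := B) (ψ_meas.map₂ (hu n) fun p c => p * c ^ 2)
    have expand (y : Ω) : X.tilt B u (n + 1) y ^ 2 * Real.exp (-X.energy B u (n + 1) y) =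
        ψ y + 2 * (ψ y * u n y * X.innovation B n y)
          + ψ y * u n y ^ 2 * X.innovation B n y ^ 2 := by
      rw [tilt_succ]
      ring
    calc 𝔼 y ∈ B, X.tilt B u (n + 1) y ^ 2 * Real.exp (-X.energy B u (n + 1) y)
        = 𝔼 y ∈ B, ψ y * (X.condVar B n y * u n y ^ 2 + 1) := by
          simp only [expand, expect_add_distrib, ← mul_expect, hmean, hsq, mul_add, mul_zero,
            mul_one, add_zero]
          rw [add_comm]
          simp only [mul_comm (X.condVar B n _), mul_assoc]
      _ ≤ 𝔼 y ∈ B, X.tilt B u n y ^ 2 * Real.exp (-X.energy B u n y) := by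
          refine expect_le_expect fun y _ => ?_
          have := Real.add_one_le_exp (X.condVar B n y * u n y ^ 2)
          have hexp : Real.exp (-X.energy B u n y) = Real.exp (-X.energy B u (n + 1) y) *
              Real.exp (X.condVar B n y * u n y ^ 2) := by
            rw [← Real.exp_add, energy_succ, neg_add, neg_add_cancel_right]
          rw [hexp, ← mul_assoc]
          gcongr
      _ ≤ 1 := ih

lemma expect_tilt_mul_energy_succ (hu : ∀ k, X.PrefixMeas k (u k)) (n : ℕ) :
    𝔼 y ∈ B, X.tilt B u (n + 1) y * X.energy B u (n + 1) y =
      𝔼 y ∈ B, X.tilt B u n y * X.energy B u n y +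
        𝔼 y ∈ B, X.tilt B u n y * u n y ^ 2 * X.condVar B n y := by
  have hmart := expect_mul_tilt_of_le (B := B) hu (prefixMeas_energy_succ (B := B) hu n) n.le_succ
  simp only [mul_comm (X.tilt B u (n + 1) _), hmart]
  rw [← expect_add_distrib]
  exact expect_congr rfl fun y _ => by rw [energy_succ]; ring

lemma expect_tilt_sq_le {L : ℝ} (hu : ∀ k, X.PrefixMeas k (u k)) (hB : B.Nonempty)
    (hL : ∀ y ∈ B, X.energy B u n y ≤ L) : 𝔼 y ∈ B, X.tilt B u n y ^ 2 ≤ Real.exp L :=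
  calc 𝔼 y ∈ B, X.tilt B u n y ^ 2
      ≤ 𝔼 y ∈ B, Real.exp L * (X.tilt B u n y ^ 2 * Real.exp (-X.energy B u n y)) := by
        refine expect_le_expect fun y hy => ?_
        rw [mul_left_comm, ← Real.exp_add]
        exact le_mul_of_one_le_right (sq_nonneg _) (Real.one_le_exp (by linarith [hL y hy]))
    _ ≤ Real.exp L := by
        rw [← mul_expect]
        exact mul_le_of_le_one_right (Real.exp_pos _).le
          (expect_tilt_sq_mul_exp_neg_energy_le hu hB n)

lemma tilt_mul_log_succ_le (hρ : ρ ≤ 1 / 2) (hbound : ∀ k y, |u k y * X.innovation B k y| ≤ ρ)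
    (n : ℕ) (y : Ω) :
    X.tilt B u (n + 1) y * Real.log (X.tilt B u (n + 1) y) ≤
      X.tilt B u n y * Real.log (X.tilt B u n y)
        + X.tilt B u n y * (Real.log (X.tilt B u n y) + 1) * u n y * X.innovation B n y
        + (1 / 2 + 4 * ρ) * (X.tilt B u n y * u n y ^ 2 * X.innovation B n y ^ 2) := by
  have hpos : 0 < X.tilt B u n y := tilt_pos (by linarith) hbound n y
  have hne : 1 + u n y * X.innovation B n y ≠ 0 := by linarith [(abs_le.mp (hbound n y)).1]
  have hstep := one_add_mul_log_one_add_le (hbound n y) hρ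
  rw [tilt_succ, Real.log_mul hpos.ne' hne]
  linarith [mul_le_mul_of_nonneg_left hstep hpos.le]

lemma expect_tilt_mul_log_le (hu : ∀ k, X.PrefixMeas k (u k)) (hρ : ρ ≤ 1 / 2)
    (hbound : ∀ k y, |u k y * X.innovation B k y| ≤ ρ) (n : ℕ) :
    𝔼 y ∈ B, X.tilt B u n y * Real.log (X.tilt B u n y) ≤
      (1 / 2 + 4 * ρ) * 𝔼 y ∈ B, X.tilt B u n y * X.energy B u n y := by
  induction n with
  | zero => simp [tilt, energy]
  | succ n ih =>
    have tilt_meas : X.PrefixMeas n (X.tilt B u n) := prefixMeas_tilt hu n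
    have hmean := expect_mul_innovation (B := B)
      (tilt_meas.map₂ (hu n) fun t c => t * (Real.log t + 1) * c)
    have hsq := expect_mul_innovation_sq (B := B) (tilt_meas.map₂ (hu n) fun t c => t * c ^ 2)
    refine (expect_le_expect fun y _ => tilt_mul_log_succ_le hρ hbound n y).trans ?_
    simp only [expect_add_distrib, ← mul_expect, hmean, hsq, expect_tilt_mul_energy_succ hu n]
    linarith

variable (X)

/-- The regression coefficients of `g`, set to `0` where they exceed `ℓ` in absolute value. -/
noncomputable def clipCoef (B : Finset Ω) (g : Ω → ℝ) (ℓ : ℝ) (k : ℕ) (y : Ω) : ℝ :=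
  if |X.regCoef B k g y| ≤ ℓ then X.regCoef B k g y else 0

/-- The clipped regression coefficients of `g`, stopped once their energy exceeds `M`. -/
noncomputable def drift (B : Finset Ω) (g : Ω → ℝ) (ℓ M : ℝ) (k : ℕ) (y : Ω) : ℝ :=
  if X.energy B (X.clipCoef B g ℓ) k y ≤ M then X.clipCoef B g ℓ k y else 0

variable {X} {g : Ω → ℝ} {ℓ M : ℝ}

lemma prefixMeas_clipCoef (k : ℕ) : X.PrefixMeas k (X.clipCoef B g ℓ k) :=
  (prefixMeas_regCoef g).map fun c => if |c| ≤ ℓ then c else 0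

lemma prefixMeas_drift (k : ℕ) : X.PrefixMeas k (X.drift B g ℓ M k) :=
  (prefixMeas_energy prefixMeas_clipCoef k).map₂ (prefixMeas_clipCoef k)
    fun e c => if e ≤ M then c else 0

lemma abs_clipCoef_le (hℓ : 0 ≤ ℓ) (k : ℕ) (y : Ω) : |X.clipCoef B g ℓ k y| ≤ ℓ := by
  rw [clipCoef]
  split_ifs with h
  · exact h
  · rwa [abs_zero]

lemma abs_drift_le_abs_clipCoef (k : ℕ) (y : Ω) :
    |X.drift B g ℓ M k y| ≤ |X.clipCoef B g ℓ k y| := by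
  rw [drift]
  split_ifs
  · rfl
  · rw [abs_zero]
    exact abs_nonneg _

lemma abs_drift_le (hℓ : 0 ≤ ℓ) (k : ℕ) (y : Ω) : |X.drift B g ℓ M k y| ≤ ℓ :=
  (abs_drift_le_abs_clipCoef k y).trans (abs_clipCoef_le hℓ k y)

lemma drift_mul_regCoef (k : ℕ) (y : Ω) :
    X.drift B g ℓ M k y * X.regCoef B k g y = X.drift B g ℓ M k y ^ 2 := by
  rw [drift, clipCoef]
  split_ifs <;> ring

lemma energy_drift_le_energy_clipCoef (n : ℕ) (y : Ω) :
    X.energy B (X.drift B g ℓ M) n y ≤ X.energy B (X.clipCoef B g ℓ) n y :=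
  sum_le_sum fun k _ => mul_le_mul_of_nonneg_left (sq_le_sq.mpr (abs_drift_le_abs_clipCoef k y))
    (condVar_nonneg k y)

lemma energy_drift_le (hℓ : 0 ≤ ℓ) (hM : 0 ≤ M) (n : ℕ) (y : Ω) :
    X.energy B (X.drift B g ℓ M) n y ≤ M + ℓ ^ 2 := by
  induction n with
  | zero =>
    rw [energy, range_zero, sum_empty]
    positivity
  | succ n ih =>
    rw [energy_succ]
    by_cases h : X.energy B (X.clipCoef B g ℓ) n y ≤ M
    · have hstep : X.condVar B n y * X.drift B g ℓ M n y ^ 2 ≤ 1 * ℓ ^ 2 :=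
        mul_le_mul (condVar_le_one n y)
          (sq_le_sq.mpr ((abs_drift_le hℓ n y).trans (le_abs_self ℓ))) (sq_nonneg _) zero_le_one
      linarith [(energy_drift_le_energy_clipCoef (M := M) n y).trans h]
    · rwa [drift, if_neg h, zero_pow two_ne_zero, mul_zero, add_zero]

lemma min_energy_clipCoef_le_energy_drift (n : ℕ) (y : Ω) :
    min (X.energy B (X.clipCoef B g ℓ) n y) M ≤ X.energy B (X.drift B g ℓ M) n y := by
  induction n with
  | zero => exact min_le_left _ _
  | succ n ih =>
    by_cases h : X.energy B (X.clipCoef B g ℓ) n y ≤ M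
    · rw [min_eq_left h] at ih
      refine (min_le_left _ _).trans ?_
      rw [energy_succ, energy_succ, drift, if_pos h]
      gcongr
    · rw [min_eq_right (not_le.mp h).le] at ih
      exact (min_le_right _ _).trans (ih.trans (energy_mono _ y n.le_succ))

lemma energy_const_mul (a : ℝ) (n : ℕ) (y : Ω) :
    X.energy B (fun k y => a * u k y) n y = a ^ 2 * X.energy B u n y := by
  rw [energy, energy, mul_sum]
  exact sum_congr rfl fun k _ => by ring

lemma abs_mul_drift_mul_innovation_le {a : ℝ} (hℓ : 0 ≤ ℓ) (haℓ : |a| * ℓ * 2 ≤ ρ) (k : ℕ)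
    (y : Ω) : |a * X.drift B g ℓ M k y * X.innovation B k y| ≤ ρ := by
  rw [abs_mul, abs_mul]
  refine (mul_le_mul ?_ (abs_innovation_le k y) (abs_nonneg _) (by positivity)).trans haℓ
  gcongr
  exact abs_drift_le hℓ k y

lemma expect_tilt_drift_mul (a : ℝ) (n : ℕ) :
    𝔼 y ∈ B, X.tilt B (fun k y => a * X.drift B g ℓ M k y) n y * g y =
      𝔼 y ∈ B, g y + a * 𝔼 y ∈ B, X.tilt B (fun k y => a * X.drift B g ℓ M k y) n y *
        X.energy B (X.drift B g ℓ M) n y := by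
  rw [expect_tilt_mul fun k => (prefixMeas_drift k).map (a * ·), mul_expect]
  simp only [mul_assoc, drift_mul_regCoef, mul_left_comm _ a, ← mul_sum]
  rfl

/-- Under the tilt driven by `a • drift`, the mean of `a * g` rises by `a ^ 2` times the energy,
half of which pays for the entropy; `K` bounds the second moment of the tilt. -/
lemma exp_le_expect_exp_mul {a η K t : ℝ} (hB : B.Nonempty) (hℓ : 0 ≤ ℓ) (hM : 0 ≤ M)
    (haℓ : |a| * ℓ * 2 ≤ ρ) (hρ : ρ ≤ 1 / 8) (hη : 0 < η)
    (hK : Real.exp (a ^ 2 * (M + ℓ ^ 2)) ≤ K) (ht : 0 ≤ t) :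
    Real.exp (a * 𝔼 y ∈ B, g y + (1 / 2 - 4 * ρ) * a ^ 2 * (t * (1 - (η + K / η *
        uniformProb B fun y => X.energy B (X.drift B g ℓ M) n y < t) / 2)))
      ≤ 𝔼 y ∈ B, Real.exp (a * g y) := by
  set E := X.energy B (X.drift B g ℓ M) n
  let u : ℕ → Ω → ℝ := fun k y => a * X.drift B g ℓ M k y
  have hu (k) : X.PrefixMeas k (u k) := (prefixMeas_drift k).map (a * ·)
  have hbound : ∀ k y, |u k y * X.innovation B k y| ≤ ρ := abs_mul_drift_mul_innovation_le hℓ haℓ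
  have hpos (y) : 0 < X.tilt B u n y := tilt_pos (by linarith) hbound n y
  have henergy (y) : X.energy B u n y = a ^ 2 * E y := energy_const_mul a n y
  have hmean : 𝔼 y ∈ B, X.tilt B u n y * g y =
      𝔼 y ∈ B, g y + a * 𝔼 y ∈ B, X.tilt B u n y * E y := expect_tilt_drift_mul a n
  have hentropy := expect_tilt_mul_log_le (B := B) hu (by linarith) hbound n
  simp only [henergy, mul_left_comm _ (a ^ 2), ← mul_expect] at hentropy
  have hsecond : 𝔼 y ∈ B, X.tilt B u n y ^ 2 ≤ K := by
    refine (expect_tilt_sq_le hu hB fun y _ => ?_).trans hK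
    rw [henergy]
    gcongr
    exact energy_drift_le hℓ hM n y
  have hgain := le_expect_mul_of_expect_sq_le (f := E) (fun y _ => (hpos y).le)
    (expect_tilt hu hB n) hsecond (fun y _ => energy_nonneg _ n y)
    ((Real.exp_pos _).trans_le hK) hη ht
  refine (Real.exp_le_exp.mpr ?_).trans
    (exp_expect_mul_sub_log_le (fun y _ => hpos y) (expect_tilt hu hB n))
  simp only [mul_sub, expect_sub_distrib, mul_left_comm _ a, ← mul_expect, hmean]
  have := mul_le_mul_of_nonneg_left hgain
    (mul_nonneg (by linarith : 0 ≤ 1 / 2 - 4 * ρ) (sq_nonneg a))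
  linarith

/-! ### Linear forms in random signs -/

variable (X)

/-- `rowVec`, replaced by `0` where its off-diagonal part is large. -/
noncomputable def truncRowVec (B : Finset Ω) (k : Fin n) (y : Ω) : EuclideanSpace ℝ (Fin n) :=
  if X.offSq B k y ≤ 1 then X.rowVec B n k y else 0

/-- The frame at `y`: the energy of the form `z ↦ ∑ j, v j * X j z` is at least
`∑ k, ⟪frameVec k, v⟫ ^ 2` as long as its coefficients are not clipped. -/
noncomputable def frameVec (B : Finset Ω) (k : Fin n) (y : Ω) : EuclideanSpace ℝ (Fin n) :=
  √(X.condVar B k y) • X.truncRowVec B k y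

/-- The linear form with coefficients `v` in the first `n` signs. -/
def linearForm (v : EuclideanSpace ℝ (Fin n)) (z : Ω) : ℝ := ∑ j, v j * X j z

variable {X} {η : ℝ}

lemma regCoef_linearForm (k : ℕ) (v : EuclideanSpace ℝ (Fin n)) (y : Ω) :
    X.regCoef B k (X.linearForm v) y = ⟪X.rowVec B n k y, v⟫ := by
  refine (regCoef_sum_mul univ v (fun j : Fin n => X j) y).trans ?_
  simp only [PiLp.inner_apply, RCLike.inner_apply, rowVec, conj_trivial]

lemma condVar_eq_zero_or_rowVec_self (k : Fin n) (hy : y ∈ B) :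
    X.condVar B k y = 0 ∧ X.rowVec B n k y k = 0 ∨ X.rowVec B n k y k = 1 := by
  rcases eq_or_ne (X.condVar B k y) 0 with h | h
  · exact Or.inl ⟨h, by simp only [rowVec, regCoef, h, div_zero]⟩
  · exact Or.inr (regCoef_self hy h)

lemma norm_truncRowVec_sq_le (k : Fin n) (hy : y ∈ B) : ‖X.truncRowVec B k y‖ ^ 2 ≤ 2 := by
  rw [truncRowVec]
  split_ifs with h
  · have hself : X.rowVec B n k y k ^ 2 ≤ 1 := by
      rcases condVar_eq_zero_or_rowVec_self k hy with ⟨-, h⟩ | h <;> rw [h] <;> norm_num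
    rw [EuclideanSpace.real_norm_sq_eq, ← add_sum_erase _ _ (mem_univ k)]
    rw [offSq] at h
    linarith
  · norm_num

lemma norm_frameVec_sub_sq_le (k : Fin n) (hy : y ∈ B) :
    ‖X.frameVec B k y - EuclideanSpace.basisFun (Fin n) ℝ k‖ ^ 2 ≤
      X.bias B k y ^ 2 + X.condVar B k y * X.offSq B k y := by
  have hv0 := condVar_nonneg (X := X) (B := B) k y
  have hbias : X.bias B k y ^ 2 = 1 - X.condVar B k y := by rw [condVar, sub_sub_cancel]
  rw [frameVec, truncRowVec]
  split_ifs with h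
  · set v := X.condVar B k y
    have hdiag : (√v * X.rowVec B n k y k - 1) ^ 2 ≤ X.bias B k y ^ 2 := by
      rw [hbias]
      rcases condVar_eq_zero_or_rowVec_self k hy with ⟨h0, -⟩ | hk
      · simp only [show v = 0 from h0]
        norm_num
      · have hsq := Real.sq_sqrt hv0
        have : √v ≤ 1 := Real.sqrt_le_one.mpr (condVar_le_one _ _)
        rw [hk]
        nlinarith [Real.sqrt_nonneg v]
    have hoff : ∑ j ∈ univ.erase k, (√v * X.rowVec B n k y j - if j = k then 1 else 0) ^ 2 =
        v * X.offSq B k y := by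
      rw [offSq, mul_sum]
      refine sum_congr rfl fun j hj => ?_
      rw [if_neg (ne_of_mem_erase hj), sub_zero, mul_pow, Real.sq_sqrt hv0]
    rw [EuclideanSpace.real_norm_sq_eq, ← add_sum_erase _ _ (mem_univ k)]
    simp only [EuclideanSpace.basisFun_apply, PiLp.sub_apply, PiLp.smul_apply, smul_eq_mul,
      PiLp.single_apply, hoff, if_true]
    gcongr
  · rw [smul_zero, zero_sub, norm_neg, OrthonormalBasis.norm_eq_one, hbias]
    nlinarith

lemma sum_inner_frameVec_sq_le_energy {v : EuclideanSpace ℝ (Fin n)}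
    (hv : ∀ k, |⟪X.truncRowVec B k y, v⟫| ≤ ℓ) :
    ∑ k, ⟪X.frameVec B k y, v⟫ ^ 2 ≤ X.energy B (X.clipCoef B (X.linearForm v) ℓ) n y := by
  rw [energy, ← Fin.sum_univ_eq_sum_range fun k =>
    X.condVar B k y * X.clipCoef B (X.linearForm v) ℓ k y ^ 2]
  refine sum_le_sum fun k _ => ?_
  have hv0 := condVar_nonneg (X := X) (B := B) k y
  rw [frameVec, real_inner_smul_left, mul_pow, Real.sq_sqrt hv0]
  refine mul_le_mul_of_nonneg_left ?_ hv0
  have hk := hv k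
  rw [truncRowVec] at hk ⊢
  split_ifs at hk ⊢
  · rw [clipCoef, regCoef_linearForm, if_pos hk]
  · rw [inner_zero_left, zero_pow two_ne_zero]
    exact sq_nonneg _

variable (X) in
/-- The energy of the drift for the form with coefficients `signVec x`, stopped at level `n`, is
substantially below `n`. -/
def LowEnergy (B : Finset Ω) (ℓ η : ℝ) (x : Fin n → Bool) (y : Ω) : Prop :=
  X.energy B (X.drift B (X.linearForm (signVec x)) ℓ n) n y < (1 - η) ^ 2 * n

lemma uniformProb_lowEnergy_le (hy : y ∈ B) (hη : 0 < η) (hη1 : η ≤ 1) (hℓ : 0 ≤ ℓ)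
    (hdev : X.deviation B n y ≤ η ^ 3 / 16 * n) :
    uniformProb univ (fun x : Fin n → Bool => X.LowEnergy B ℓ η x y) ≤
      n * (2 * Real.exp (-(ℓ ^ 2 / 4))) + Real.exp (-(η * n / 8)) := by
  have hframe := uniformProb_sum_inner_signVec_sq_lt_le (fun k => X.frameVec B k y) hη hη1 <| by
    rw [Fintype.card_fin]
    exact (sum_le_sum fun k _ => norm_frameVec_sub_sq_le k hy).trans hdev
  rw [Fintype.card_fin] at hframe
  have hclip (k : Fin n) :=
    uniformProb_lt_abs_inner_signVec_le (norm_truncRowVec_sq_le (X := X) k hy) hℓ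
  have hcover : ∀ x ∈ univ, X.LowEnergy B ℓ η x y →
      (∃ k : Fin n, ℓ < |⟪X.truncRowVec B k y, signVec x⟫|) ∨
        ∑ k : Fin n, ⟪X.frameVec B k y, signVec x⟫ ^ 2 < (1 - η) ^ 2 * n := fun x _ hx => by
    refine or_iff_not_imp_left.mpr fun hexc => ?_
    push Not at hexc
    have hsub : (1 - η) ^ 2 * n ≤ (n : ℝ) :=
      mul_le_of_le_one_left n.cast_nonneg (by nlinarith)
    rcases min_lt_iff.mp ((min_energy_clipCoef_le_energy_drift n y).trans_lt hx) with h | h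
    · exact (sum_inner_frameVec_sq_le_energy hexc).trans_lt h
    · exact absurd h hsub.not_gt
  calc uniformProb univ (fun x : Fin n → Bool => X.LowEnergy B ℓ η x y)
      ≤ ∑ _k : Fin n, 2 * Real.exp (-(ℓ ^ 2 / 4)) + Real.exp (-(η * n / 8)) :=
        (uniformProb_le_sum_add hcover).trans (add_le_add (sum_le_sum fun k _ => hclip k) hframe)
    _ = n * (2 * Real.exp (-(ℓ ^ 2 / 4))) + Real.exp (-(η * n / 8)) := by
        rw [sum_const, card_univ, Fintype.card_fin, nsmul_eq_mul]

lemma expect_uniformProb_lowEnergy_le (A : Finset (Fin n → Bool)) (hB : B.Nonempty)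
    (hinj : Set.InjOn (fun y (j : Fin n) => X j y) B) (hn : 0 < n) (hη : 0 < η) (hη1 : η ≤ 1)
    (hℓ : 0 ≤ ℓ) :
    𝔼 x ∈ A, uniformProb B (X.LowEnergy B ℓ η x) ≤
      192 / (η ^ 3 * n) * Real.log (2 ^ n / #B) +
        2 ^ n / #A * (n * (2 * Real.exp (-(ℓ ^ 2 / 4))) + Real.exp (-(η * n / 8))) := by
  set τ : ℝ := n * (2 * Real.exp (-(ℓ ^ 2 / 4))) + Real.exp (-(η * n / 8))
  have hτ : 0 ≤ 2 ^ n / #A * τ := by positivity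
  have hn' : (0 : ℝ) < n := Nat.cast_pos.mpr hn
  have ptwise : ∀ y ∈ B, uniformProb A (fun x => X.LowEnergy B ℓ η x y) ≤
      16 / (η ^ 3 * n) * X.deviation B n y + 2 ^ n / #A * τ := fun y hy => by
    rcases le_total (X.deviation B n y) (η ^ 3 / 16 * n) with hdev | hdev
    · have hcard : (#(univ : Finset (Fin n → Bool)) : ℝ) = 2 ^ n := by simp
      have hsub := uniformProb_le_card_div_card_mul (subset_univ A) fun x => X.LowEnergy B ℓ η x y
      rw [hcard] at hsub
      refine le_add_of_nonneg_of_le (mul_nonneg (by positivity) (deviation_nonneg n y)) ?_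
      refine hsub.trans ?_
      gcongr
      exact uniformProb_lowEnergy_le hy hη hη1 hℓ hdev
    · refine le_add_of_le_of_nonneg ((uniformProb_le_one _ _).trans ?_) hτ
      rw [div_mul_eq_mul_div, one_le_div (by positivity)]
      linarith
  calc 𝔼 x ∈ A, uniformProb B (X.LowEnergy B ℓ η x)
      ≤ 𝔼 y ∈ B, (16 / (η ^ 3 * n) * X.deviation B n y + 2 ^ n / #A * τ) := by
        rw [expect_uniformProb_comm]
        exact expect_le_expect ptwise
    _ ≤ 16 / (η ^ 3 * n) * (12 * Real.log (2 ^ n / #B)) + 2 ^ n / #A * τ := by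
        rw [expect_add_distrib, expect_const hB, ← mul_expect]
        gcongr
        exact expect_deviation_le hinj hB
    _ = 192 / (η ^ 3 * n) * Real.log (2 ^ n / #B) + 2 ^ n / #A * τ := by ring

lemma exp_le_expect_expect_exp_linearForm {a K : ℝ} {A : Finset (Fin n → Bool)} (hA : A.Nonempty)
    (hB : B.Nonempty) (hℓ : 0 ≤ ℓ) (haℓ : |a| * ℓ * 2 ≤ ρ) (hρ : ρ ≤ 1 / 8) (hη : 0 < η)
    (hK : Real.exp (a ^ 2 * (n + ℓ ^ 2)) ≤ K)
    (hlow : 𝔼 x ∈ A, uniformProb B (X.LowEnergy B ℓ η x) ≤ η ^ 2 / K) :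
    Real.exp (a * 𝔼 x ∈ A, 𝔼 y ∈ B, X.linearForm (signVec x) y +
        (1 / 2 - 4 * ρ) * a ^ 2 * ((1 - η) ^ 2 * n * (1 - η))) ≤
      𝔼 x ∈ A, 𝔼 y ∈ B, Real.exp (a * X.linearForm (signVec x) y) := by
  have hK0 : 0 < K := (Real.exp_pos _).trans_le hK
  have hloss : K / η * 𝔼 x ∈ A, uniformProb B (X.LowEnergy B ℓ η x) ≤ η := by
    rw [div_mul_eq_mul_div, div_le_iff₀ hη, ← sq, mul_comm]
    exact (le_div_iff₀ hK0).mp hlow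
  have hcoef : 0 ≤ (1 / 2 - 4 * ρ) * a ^ 2 := mul_nonneg (by linarith) (sq_nonneg a)
  let expo (x : Fin n → Bool) : ℝ := a * 𝔼 y ∈ B, X.linearForm (signVec x) y +
    (1 / 2 - 4 * ρ) * a ^ 2 * ((1 - η) ^ 2 * n * (1 - (η + K / η *
      uniformProb B (X.LowEnergy B ℓ η x)) / 2))
  have hmean : 𝔼 x ∈ A, expo x = a * 𝔼 x ∈ A, 𝔼 y ∈ B, X.linearForm (signVec x) y +
      (1 / 2 - 4 * ρ) * a ^ 2 * ((1 - η) ^ 2 * n * (1 - (η + K / η *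
        𝔼 x ∈ A, uniformProb B (X.LowEnergy B ℓ η x)) / 2)) := by
    simp only [expo, expect_add_distrib, ← mul_expect, expect_sub_distrib, ← expect_div,
      expect_const hA]
  calc _ ≤ Real.exp (𝔼 x ∈ A, expo x) := by
        rw [hmean]
        gcongr
        linarith
    _ ≤ 𝔼 x ∈ A, Real.exp (expo x) := exp_expect_le hA expo
    _ ≤ _ := expect_le_expect fun x _ =>
        exp_le_expect_exp_mul hB hℓ n.cast_nonneg haℓ hρ hη hK (by positivity)

end SignSequence

/-! ### Correlated pairs in the cube -/

section Cube

variable {N : ℕ} {A B : Finset (Fin N → Bool)} {a c ε δ η : ℝ}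

lemma xiMass_eq_prod (p : ℝ) (x y : Fin N → Bool) :
    xiMass N p x y = ∏ j, (1 + p * (signVec x j * signVec y j)) / 4 := by
  have hcompl : #{j | ¬x j = y j} = N - agree x y := by
    rw [filter_not, card_sdiff_of_subset (filter_subset _ _), card_univ, Fintype.card_fin, agree]
  calc xiMass N p x y = ∏ j, 1 / 2 * if x j = y j then (1 + p) / 2 else (1 - p) / 2 := by
        rw [prod_mul_distrib, prod_ite, prod_const, prod_const, prod_const, hcompl, card_univ,
          Fintype.card_fin, ← mul_assoc, xiMass, agree]
    _ = ∏ j, (1 + p * (signVec x j * signVec y j)) / 4 := prod_congr rfl fun j _ => by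
        cases hx : x j <;> cases hy : y j <;> simp [signVec, hx, hy] <;> ring

lemma xiProb_zero (A B : Finset (Fin N → Bool)) :
    xiProb N 0 A B = #A / 2 ^ N * (#B / 2 ^ N) := by
  simp only [xiProb, xiMass_eq_prod, zero_mul, add_zero, prod_const, card_univ, Fintype.card_fin,
    sum_const, nsmul_eq_mul]
  rw [show (1 / 4 : ℝ) = 1 / 2 * (1 / 2) by norm_num, mul_pow, one_div_pow]
  ring

lemma exp_inner_signVec_le_xiMass (ha : |a| ≤ 1 / 2) (x y : Fin N → Bool) :
    (1 / 4) ^ N * Real.exp (a * ⟪signVec x, signVec y⟫ - (a ^ 2 / 2 + 2 * |a| ^ 3) * N) ≤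
      xiMass N a x y := by
  have hfactor (j : Fin N) :
      1 / 4 * Real.exp (a * (signVec x j * signVec y j) - (a ^ 2 / 2 + 2 * |a| ^ 3)) ≤
        (1 + a * (signVec x j * signVec y j)) / 4 := by
    have habs : |signVec x j * signVec y j| = 1 := by
      simp only [signVec]
      split_ifs <;> norm_num
    have h := exp_sub_le_one_add (t := a * (signVec x j * signVec y j))
      (by rwa [abs_mul, habs, mul_one])
    rw [abs_mul a, habs, mul_one, mul_pow, ← sq_abs (signVec x j * signVec y j), habs, one_pow,
      mul_one] at h
    linarith
  calc (1 / 4) ^ N * Real.exp (a * ⟪signVec x, signVec y⟫ - (a ^ 2 / 2 + 2 * |a| ^ 3) * N)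
      = ∏ j, 1 / 4 * Real.exp (a * (signVec x j * signVec y j) - (a ^ 2 / 2 + 2 * |a| ^ 3)) := by
        rw [prod_mul_distrib, ← Real.exp_sum, sum_sub_distrib, ← mul_sum, sum_const, prod_const,
          card_univ, Fintype.card_fin, nsmul_eq_mul, mul_comm (N : ℝ)]
        simp only [PiLp.inner_apply, RCLike.inner_apply, conj_trivial, mul_comm]
    _ ≤ xiMass N a x y := by
        rw [xiMass_eq_prod]
        exact prod_le_prod (fun j _ => by positivity) fun j _ => hfactor j

lemma xiProb_zero_mul_expect_exp_le (ha : |a| ≤ 1 / 2) (A B : Finset (Fin N → Bool)) :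
    xiProb N 0 A B * (Real.exp (-((a ^ 2 / 2 + 2 * |a| ^ 3) * N)) *
        𝔼 x ∈ A, 𝔼 y ∈ B, Real.exp (a * ⟪signVec x, signVec y⟫)) ≤ xiProb N a A B := by
  have h4 : (1 / 4 : ℝ) ^ N = 1 / 2 ^ N * (1 / 2 ^ N) := by
    rw [← one_div_pow, ← mul_pow]
    norm_num
  calc xiProb N 0 A B * (Real.exp (-((a ^ 2 / 2 + 2 * |a| ^ 3) * N)) *
        𝔼 x ∈ A, 𝔼 y ∈ B, Real.exp (a * ⟪signVec x, signVec y⟫))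
      = ∑ x ∈ A, ∑ y ∈ B, (1 / 4) ^ N *
          Real.exp (a * ⟪signVec x, signVec y⟫ - (a ^ 2 / 2 + 2 * |a| ^ 3) * N) := by
        simp only [sub_eq_add_neg, Real.exp_add, ← card_smul_expect, nsmul_eq_mul, ← mul_expect,
          ← expect_mul]
        rw [h4, xiProb_zero]
        ring
    _ ≤ xiProb N a A B :=
        sum_le_sum fun x _ => sum_le_sum fun y _ => exp_inner_signVec_le_xiMass ha x y

lemma card_div_two_pow_le_one (A : Finset (Fin N → Bool)) : #A / (2 : ℝ) ^ N ≤ 1 := by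
  have h := card_le_univ A
  rw [Fintype.card_fun, Fintype.card_bool, Fintype.card_fin] at h
  exact div_le_one_of_le₀ (by exact_mod_cast h) (by positivity)

lemma two_pow_div_card_le_exp {t : ℝ} (h : Real.exp (-t) ≤ xiProb N 0 A B) :
    2 ^ N / #A ≤ Real.exp t ∧ 2 ^ N / #B ≤ Real.exp t := by
  have hinv {S : Finset (Fin N → Bool)} (hS : Real.exp (-t) ≤ #S / 2 ^ N) :
      2 ^ N / #S ≤ Real.exp t := by
    have h := inv_anti₀ (Real.exp_pos _) hS
    rwa [inv_div, ← Real.exp_neg, neg_neg] at h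
  rw [xiProb_zero] at h
  exact ⟨hinv (h.trans (mul_le_of_le_one_right (by positivity) (card_div_two_pow_le_one B))),
    hinv (h.trans (mul_le_of_le_one_left (by positivity) (card_div_two_pow_le_one A)))⟩

lemma nonempty_of_xiProb_pos {p : ℝ} (h : 0 < xiProb N p A B) : A.Nonempty ∧ B.Nonempty := by
  constructor <;> rw [nonempty_iff_ne_empty] <;> rintro rfl <;> simp [xiProb] at h

/-- The coordinates of the cube, continued by the constant sign `1` beyond the dimension. -/
noncomputable def cubeSigns (N : ℕ) : SignSequence (Fin N → Bool) where
  toFun k x := if h : k < N then signVec x ⟨k, h⟩ else 1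
  sq_eq_one' k x := by
    simp only [signVec]
    split_ifs <;> norm_num

lemma cubeSigns_apply (j : Fin N) (x : Fin N → Bool) : cubeSigns N j x = signVec x j :=
  dif_pos j.2

lemma linearForm_cubeSigns (v : EuclideanSpace ℝ (Fin N)) (y : Fin N → Bool) :
    (cubeSigns N).linearForm v y = ⟪v, signVec y⟫ := by
  simp only [SignSequence.linearForm, cubeSigns_apply, PiLp.inner_apply, RCLike.inner_apply,
    conj_trivial, mul_comm]

lemma injective_cubeSigns : Function.Injective fun y (j : Fin N) => cubeSigns N j y := by
  intro y z h
  ext j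
  have hj : signVec y j = signVec z j := by simpa only [cubeSigns_apply] using congrFun h j
  cases hy : y j <;> cases hz : z j <;> simp [signVec, hy, hz] at hj ⊢ <;> norm_num at hj

lemma expect_uniformProb_lowEnergy_cubeSigns_le (hN : 0 < N) (hη : 0 < η) (hη1 : η ≤ 1 / 2)
    (hδ : δ ≤ η ^ 2 / 8) (hAB : Real.exp (-(δ * N)) ≤ xiProb N 0 A B) :
    𝔼 x ∈ A, uniformProb B ((cubeSigns N).LowEnergy B (η * √N) η x) ≤
      192 * δ / η ^ 3 + 3 * (N * Real.exp (-(η ^ 2 / 8) * N)) := by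
  have hNpos : (0 : ℝ) < N := Nat.cast_pos.mpr hN
  obtain ⟨hA, hB⟩ := two_pow_div_card_le_exp hAB
  have hBne : B.Nonempty := (nonempty_of_xiProb_pos ((Real.exp_pos _).trans_le hAB)).2
  have hentropy : Real.log (2 ^ N / #B) ≤ δ * N :=
    (Real.log_le_iff_le_exp (div_pos (by positivity) (Nat.cast_pos.mpr hBne.card_pos))).mpr hB
  have htail : N * (2 * Real.exp (-((η * √N) ^ 2 / 4))) + Real.exp (-(η * N / 8)) ≤
      3 * N * Real.exp (-(η ^ 2 / 4 * N)) := by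
    have hclip : (η * √N) ^ 2 / 4 = η ^ 2 / 4 * N := by
      rw [mul_pow, Real.sq_sqrt hNpos.le]
      ring
    have hsigns : Real.exp (-(η * N / 8)) ≤ N * Real.exp (-(η ^ 2 / 4 * N)) :=
      calc Real.exp (-(η * N / 8)) ≤ 1 * Real.exp (-(η ^ 2 / 4 * N)) := by
            rw [one_mul, Real.exp_le_exp]
            nlinarith [mul_nonneg hη.le hNpos.le]
        _ ≤ N * Real.exp (-(η ^ 2 / 4 * N)) := by
            gcongr
            exact_mod_cast hN
    rw [hclip]
    linarith
  calc 𝔼 x ∈ A, uniformProb B ((cubeSigns N).LowEnergy B (η * √N) η x)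
      ≤ 192 / (η ^ 3 * N) * Real.log (2 ^ N / #B) + 2 ^ N / #A *
          (N * (2 * Real.exp (-((η * √N) ^ 2 / 4))) + Real.exp (-(η * N / 8))) :=
        SignSequence.expect_uniformProb_lowEnergy_le A hBne injective_cubeSigns.injOn hN hη
          (by linarith) (by positivity)
    _ ≤ 192 / (η ^ 3 * N) * (δ * N) +
          Real.exp (η ^ 2 / 8 * N) * (3 * N * Real.exp (-(η ^ 2 / 4 * N))) := by
        gcongr
        exact hA.trans (by gcongr)
    _ = 192 * δ / η ^ 3 + 3 * (N * Real.exp (-(η ^ 2 / 8) * N)) := by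
        rw [mul_left_comm (Real.exp _), ← Real.exp_add,
          show η ^ 2 / 8 * N + -(η ^ 2 / 4 * N) = -(η ^ 2 / 8) * N by ring]
        field_simp

/-- The mean inner product of a random sign vector of `A` with one of `B`. -/
noncomputable def meanInner (A B : Finset (Fin N → Bool)) : ℝ :=
  𝔼 x ∈ A, 𝔼 y ∈ B, ⟪signVec x, signVec y⟫

lemma half_sq_add_cube_mul_sub_le {t : ℝ} (ht : 0 ≤ t) (hc : 0 < c) (hη : 0 ≤ η)
    (hη1 : η ≤ 1 / 2) (hηc : 2 * c * η ≤ 1 / 8) (hηε : c ^ 2 * (8 * c * η + 2 * η) ≤ ε / 2)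
    (hac : a ^ 2 * t ≤ c ^ 2) (haε : |a| ≤ ε / (4 * c ^ 2)) :
    (a ^ 2 / 2 + 2 * |a| ^ 3) * t - ε ≤
      (1 / 2 - 4 * (2 * c * η)) * a ^ 2 * ((1 - η) ^ 2 * t * (1 - η)) := by
  have hcubic : |a| ^ 3 * t ≤ ε / 4 := by
    calc |a| ^ 3 * t = |a| * (a ^ 2 * t) := by rw [← sq_abs a]; ring
      _ ≤ ε / (4 * c ^ 2) * c ^ 2 := mul_le_mul haε hac (by positivity) ((abs_nonneg a).trans haε)
      _ = ε / 4 := by field_simp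
  have hcoef : 1 / 2 - (8 * c * η + 2 * η) ≤ (1 / 2 - 4 * (2 * c * η)) * (1 - η) ^ 3 := by
    have hbernoulli : 1 - 3 * η ≤ (1 - η) ^ 3 := by nlinarith [sq_nonneg η]
    nlinarith [mul_le_mul_of_nonneg_left hbernoulli
      (by linarith : 0 ≤ 1 / 2 - 4 * (2 * c * η)), mul_nonneg (mul_nonneg hc.le hη) hη]
  have hquad : a ^ 2 * t * (8 * c * η + 2 * η) ≤ ε / 2 :=
    (mul_le_mul_of_nonneg_right hac (by positivity)).trans hηε
  linarith [mul_le_mul_of_nonneg_left hcoef (by positivity : 0 ≤ a ^ 2 * t)]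

lemma xiProb_zero_mul_exp_meanInner_le (hA : A.Nonempty) (hB : B.Nonempty) (hN : 0 < N)
    (hc : 0 < c) (hη : 0 < η) (hη1 : η ≤ 1 / 2) (hηc : 2 * c * η ≤ 1 / 8)
    (hηε : c ^ 2 * (8 * c * η + 2 * η) ≤ ε / 2) (ha : |a| ≤ c / √N) (ha1 : |a| ≤ 1 / 2)
    (haε : |a| ≤ ε / (4 * c ^ 2))
    (hlow : 𝔼 x ∈ A, uniformProb B ((cubeSigns N).LowEnergy B (η * √N) η x) ≤
      η ^ 2 / Real.exp (2 * c ^ 2)) :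
    xiProb N 0 A B * Real.exp (a * meanInner A B - ε) ≤ xiProb N a A B := by
  have hsqrt : √(N : ℝ) ^ 2 = N := Real.sq_sqrt N.cast_nonneg
  have hac : |a| * √N ≤ c := (le_div_iff₀ (Real.sqrt_pos.mpr (Nat.cast_pos.mpr hN))).mp ha
  have hac2 : a ^ 2 * N ≤ c ^ 2 := by
    rw [← hsqrt, ← sq_abs, ← mul_pow]
    gcongr
  have hclip : |a| * (η * √N) * 2 ≤ 2 * c * η := by
    calc |a| * (η * √N) * 2 = 2 * (|a| * √N) * η := by ring
      _ ≤ 2 * c * η := by gcongr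
  have hK : Real.exp (a ^ 2 * (N + (η * √N) ^ 2)) ≤ Real.exp (2 * c ^ 2) := by
    rw [Real.exp_le_exp, mul_pow, hsqrt]
    calc a ^ 2 * (N + η ^ 2 * N) = (1 + η ^ 2) * (a ^ 2 * N) := by ring
      _ ≤ 2 * c ^ 2 := by
        gcongr
        nlinarith
  have hexp := SignSequence.exp_le_expect_expect_exp_linearForm hA hB (by positivity) hclip hηc hη
    hK hlow
  simp only [linearForm_cubeSigns] at hexp
  calc xiProb N 0 A B * Real.exp (a * meanInner A B - ε)
      ≤ xiProb N 0 A B * (Real.exp (-((a ^ 2 / 2 + 2 * |a| ^ 3) * N)) *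
          Real.exp (a * meanInner A B +
            (1 / 2 - 4 * (2 * c * η)) * a ^ 2 * ((1 - η) ^ 2 * N * (1 - η)))) := by
        rw [← Real.exp_add]
        gcongr
        · exact xiProb_zero A B ▸ by positivity
        · linarith [half_sq_add_cube_mul_sub_le N.cast_nonneg hc hη.le hη1 hηc hηε hac2 haε]
    _ ≤ xiProb N 0 A B * (Real.exp (-((a ^ 2 / 2 + 2 * |a| ^ 3) * N)) *
          𝔼 x ∈ A, 𝔼 y ∈ B, Real.exp (a * ⟪signVec x, signVec y⟫)) := by
        gcongr
        · exact xiProb_zero A B ▸ by positivity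
        · exact hexp
    _ ≤ xiProb N a A B := xiProb_zero_mul_expect_exp_le ha1 A B

lemma exists_eventually_expect_uniformProb_lowEnergy_le {τ : ℝ} (hη : 0 < η) (hη1 : η ≤ 1 / 2)
    (hτ : 0 < τ) :
    ∃ δ > 0, ∀ᶠ N : ℕ in Filter.atTop, ∀ A B : Finset (Fin N → Bool),
      Real.exp (-(δ * N)) ≤ xiProb N 0 A B →
        𝔼 x ∈ A, uniformProb B ((cubeSigns N).LowEnergy B (η * √N) η x) ≤ τ := by
  have htail : Filter.Tendsto (fun N : ℕ => 3 * (N * Real.exp (-(η ^ 2 / 8) * N)))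
      Filter.atTop (nhds 0) := by
    have h := (tendsto_rpow_mul_exp_neg_mul_atTop_nhds_zero 1 (η ^ 2 / 8)
      (by positivity)).comp (tendsto_natCast_atTop_atTop (R := ℝ))
    simpa using h.const_mul 3
  refine ⟨min (η ^ 2 / 8) (τ * η ^ 3 / 384), by positivity, ?_⟩
  filter_upwards [htail.eventually_le_const (half_pos hτ), Filter.eventually_gt_atTop 0]
    with N hNτ hN A B hAB
  have hentropy : 192 * min (η ^ 2 / 8) (τ * η ^ 3 / 384) / η ^ 3 ≤ τ / 2 := by
    rw [div_le_iff₀ (by positivity)]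
    linarith [min_le_right (η ^ 2 / 8) (τ * η ^ 3 / 384)]
  linarith [expect_uniformProb_lowEnergy_cubeSigns_le hN hη hη1 (min_le_left _ _) hAB]

lemma exists_eventually_xiProb_zero_mul_exp_meanInner_le (hc : 0 < c) (hε : 0 < ε) :
    ∃ δ > 0, ∀ᶠ N : ℕ in Filter.atTop, ∀ a : ℝ, |a| ≤ c / √N → ∀ A B : Finset (Fin N → Bool),
      2 ^ (-δ * (N : ℝ)) ≤ xiProb N 0 A B →
        xiProb N 0 A B * Real.exp (a * meanInner A B - ε) ≤ xiProb N a A B := by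
  obtain ⟨η, hη, hη1, hηc, hηε⟩ : ∃ η : ℝ, 0 < η ∧ η ≤ 1 / 2 ∧ 2 * c * η ≤ 1 / 8 ∧
      c ^ 2 * (8 * c * η + 2 * η) ≤ ε / 2 := by
    refine ⟨min (1 / 2) (min (1 / (16 * c)) (ε / (2 * (c ^ 2 * (8 * c + 2))))), by positivity,
      min_le_left _ _, ?_, ?_⟩
    · have h := (min_le_right (1 / 2) _).trans
        (min_le_left (1 / (16 * c)) (ε / (2 * (c ^ 2 * (8 * c + 2)))))
      rw [le_div_iff₀ (by positivity)] at h
      linarith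
    · have h := (min_le_right (1 / 2) _).trans
        (min_le_right (1 / (16 * c)) (ε / (2 * (c ^ 2 * (8 * c + 2)))))
      rw [le_div_iff₀ (by positivity)] at h
      linarith
  obtain ⟨δ, hδ, hlow⟩ := exists_eventually_expect_uniformProb_lowEnergy_le hη hη1
    (by positivity : 0 < η ^ 2 / Real.exp (2 * c ^ 2))
  have hlim : Filter.Tendsto (fun N : ℕ => c / √(N : ℝ)) Filter.atTop (nhds 0) :=
    (Real.tendsto_sqrt_atTop.comp tendsto_natCast_atTop_atTop).const_div_atTop c
  refine ⟨δ, hδ, ?_⟩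
  filter_upwards [hlow, hlim.eventually_le_const one_half_pos,
    hlim.eventually_le_const (by positivity : 0 < ε / (4 * c ^ 2)), Filter.eventually_gt_atTop 0]
    with N hlowN hN1 hNε hN a ha A B hAB
  obtain ⟨hA, hB⟩ := nonempty_of_xiProb_pos ((Real.rpow_pos_of_pos two_pos _).trans_le hAB)
  exact xiProb_zero_mul_exp_meanInner_le hA hB hN hc hη hη1 hηc hηε ha (ha.trans hN1)
    (ha.trans hNε) (hlowN A B ((exp_neg_mul_le_two_rpow hδ.le N.cast_nonneg).trans hAB))

end Cube

end

theorem stmt1 :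
    ∀ c > (0 : ℝ), ∀ ε > (0 : ℝ), ∃ δ > (0 : ℝ), ∃ N₀ : ℕ, ∀ N ≥ N₀,
      ∀ p : ℝ, 0 ≤ p → p ≤ c / Real.sqrt N →
        ∀ A B : Finset (Fin N → Bool),
          xiProb N 0 A B ≥ (2 : ℝ) ^ (-δ * (N : ℝ)) →
          ∀ s : ℝ,
            (1 / 2) * (Real.exp s * xiProb N (-p) A B + Real.exp (-s) * xiProb N p A B)
              ≥ (1 - ε) * xiProb N 0 A B := by
  intro c hc ε hε
  obtain ⟨δ, hδ, hlarge⟩ := exists_eventually_xiProb_zero_mul_exp_meanInner_le hc hε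
  obtain ⟨N₀, hN₀⟩ := Filter.eventually_atTop.mp hlarge
  refine ⟨δ, hδ, N₀, fun N hN p hp hpc A B hAB s => ?_⟩
  have hplus := hN₀ N hN p (by rwa [abs_of_nonneg hp]) A B hAB
  have hminus := hN₀ N hN (-p) (by rwa [abs_neg, abs_of_nonneg hp]) A B hAB
  have hξ : 0 ≤ xiProb N 0 A B := (by positivity : (0 : ℝ) ≤ 2 ^ (-δ * (N : ℝ))).trans hAB
  calc (1 - ε) * xiProb N 0 A B
      ≤ (Real.exp s * Real.exp (-(p * meanInner A B) - ε) +
          Real.exp (-s) * Real.exp (p * meanInner A B - ε)) / 2 * xiProb N 0 A B := by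
        gcongr
        exact one_sub_le_exp_add_exp_div_two s (p * meanInner A B) ε
    _ = 1 / 2 * (Real.exp s * (xiProb N 0 A B * Real.exp (-p * meanInner A B - ε)) +
          Real.exp (-s) * (xiProb N 0 A B * Real.exp (p * meanInner A B - ε))) := by
        rw [neg_mul]
        ring
    _ ≤ 1 / 2 * (Real.exp s * xiProb N (-p) A B + Real.exp (-s) * xiProb N p A B) := by gcongr
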